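/- arXiv:math/0110298 — 5 statements merged into one kernel-verified Lean document; each statement's English description precedes it below -/
import Mathlib

section
/- Let Ω ⊆ ℂ be an open set, let γ : ℂ → ℝ be twice continuously differentiable on Ω with γ(z) > 0 for all z ∈ Ω, and let u : ℂ → ℝ be twice continuously differentiable on Ω and satisfy the conductivity equation ∂ₓ(γ ∂ₓu) + ∂_y(γ ∂_yu) = 0 on Ω. Define q = −γ^{−1/2}·∂(γ^{1/2}), v = γ^{1/2}·∂u and w = γ^{1/2}·∂̄u on Ω (so q, v, w : Ω → ℂ). Then on Ω one has ∂̄v = q·w and ∂w = conj(q)·v; that is, the column (v,w) solves the first-order system (D − Q)(v,w)ᵀ = 0 with D = diag(∂̄, ∂) and Q the off-diagonal matrix with entries q and conj(q). -/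
open MeasureTheory Complex

/-- Wirtinger derivative `∂f = (∂ₓf − i∂_yf)/2` of `f : ℂ → ℂ`. -/
noncomputable def wD (f : ℂ → ℂ) (z : ℂ) : ℂ :=
  (fderiv ℝ f z 1 - Complex.I * fderiv ℝ f z Complex.I) / 2

/-- Wirtinger derivative `∂̄f = (∂ₓf + i∂_yf)/2` of `f : ℂ → ℂ`. -/
noncomputable def wDbar (f : ℂ → ℂ) (z : ℂ) : ℂ :=
  (fderiv ℝ f z 1 + Complex.I * fderiv ℝ f z Complex.I) / 2

/-- If `u` solves the conductivity equation `∇·γ∇u = 0` on `Ω`, then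
`(v,w) = γ^{1/2}(∂u, ∂̄u)` solves the first order system `(D−Q)(v,w)ᵀ = 0`,
i.e. `∂̄v = q·w` and `∂w = conj(q)·v` with `q = −γ^{−1/2}∂(γ^{1/2})`. -/
theorem reduction_to_first_order_system
    (Ω : Set ℂ) (hΩ : IsOpen Ω) (γ : ℂ → ℝ) (u : ℂ → ℝ)
    (hγ : ContDiffOn ℝ 2 γ Ω) (hγpos : ∀ z ∈ Ω, 0 < γ z)
    (hu : ContDiffOn ℝ 2 u Ω)
    (hcond : ∀ z ∈ Ω,
      fderiv ℝ (fun ζ => γ ζ * fderiv ℝ u ζ 1) z 1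
        + fderiv ℝ (fun ζ => γ ζ * fderiv ℝ u ζ Complex.I) z Complex.I = 0)
    (q v w : ℂ → ℂ)
    (hq : ∀ z ∈ Ω, q z
      = -((Real.sqrt (γ z) : ℂ))⁻¹ * wD (fun ζ => (Real.sqrt (γ ζ) : ℂ)) z)
    (hv : ∀ z ∈ Ω, v z = (Real.sqrt (γ z) : ℂ) * wD (fun ζ => (u ζ : ℂ)) z)
    (hw : ∀ z ∈ Ω, w z = (Real.sqrt (γ z) : ℂ) * wDbar (fun ζ => (u ζ : ℂ)) z) :
    ∀ z ∈ Ω, wDbar v z = q z * w z ∧ wD w z = (starRingEnd ℂ) (q z) * v z := by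
  intro z hz
  have hmem : Ω ∈ nhds z := hΩ.mem_nhds hz
  have hs0 : ∀ ζ ∈ Ω, DifferentiableAt ℝ (fun ζ => Real.sqrt (γ ζ)) ζ := fun ζ hζ =>
    (((hγ.contDiffAt (hΩ.mem_nhds hζ)).differentiableAt (by norm_num))).sqrt (hγpos ζ hζ).ne'
  have hu0 : ∀ ζ ∈ Ω, DifferentiableAt ℝ u ζ := fun ζ hζ =>
    (hu.contDiffAt (hΩ.mem_nhds hζ)).differentiableAt (by norm_num)
  have key : ∀ (f : ℂ → ℝ) (ζ : ℂ), DifferentiableAt ℝ f ζ → ∀ h,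
      fderiv ℝ (fun ζ => (f ζ : ℂ)) ζ h = ((fderiv ℝ f ζ h : ℝ) : ℂ) := by
    intro f ζ hf h
    have := (Complex.ofRealCLM.hasFDerivAt (x := f ζ)).comp ζ hf.hasFDerivAt
    have h2 : HasFDerivAt (fun ζ => (f ζ : ℂ)) (Complex.ofRealCLM.comp (fderiv ℝ f ζ)) ζ := this
    rw [h2.fderiv]; rfl
  have huz : ContDiffAt ℝ 2 u z := hu.contDiffAt hmem
  have hdd : DifferentiableAt ℝ (fderiv ℝ u) z :=
    (huz.fderiv_right (m := 1) (by norm_num)).differentiableAt (by norm_num)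
  have hsym : fderiv ℝ (fderiv ℝ u) z 1 Complex.I = fderiv ℝ (fderiv ℝ u) z Complex.I 1 :=
    (huz.isSymmSndFDerivAt (by simp)).eq 1 Complex.I
  have hp : ∀ a : ℂ, HasFDerivAt (fun ζ => fderiv ℝ u ζ a)
      ((fderiv ℝ (fderiv ℝ u) z).flip a) z := by
    intro a
    have := hdd.hasFDerivAt.clm_apply (hasFDerivAt_const a z)
    simpa using this
  have hs := (hs0 z hz).hasFDerivAt
  have hγs : γ =ᶠ[nhds z] fun ζ => Real.sqrt (γ ζ) * Real.sqrt (γ ζ) := by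
    filter_upwards [hmem] with ζ hζ
    exact (Real.mul_self_sqrt (hγpos ζ hζ).le).symm
  have hpos : 0 < Real.sqrt (γ z) := Real.sqrt_pos.2 (hγpos z hz)
  have hg := (hs.fun_mul hs).congr_of_eventuallyEq hγs
  have hc := hcond z hz
  rw [(hg.fun_mul (hp 1)).fderiv, (hg.fun_mul (hp Complex.I)).fderiv] at hc
  have ev : v =ᶠ[nhds z] fun ζ => (((Real.sqrt (γ ζ) * fderiv ℝ u ζ 1 : ℝ) : ℂ)
      - Complex.I * ((Real.sqrt (γ ζ) * fderiv ℝ u ζ Complex.I : ℝ) : ℂ)) * (1/2) := by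
    filter_upwards [hmem] with ζ hζ
    rw [hv ζ hζ, wD, key u ζ (hu0 ζ hζ), key u ζ (hu0 ζ hζ)]
    push_cast; ring
  have ew : w =ᶠ[nhds z] fun ζ => (((Real.sqrt (γ ζ) * fderiv ℝ u ζ 1 : ℝ) : ℂ)
      + Complex.I * ((Real.sqrt (γ ζ) * fderiv ℝ u ζ Complex.I : ℝ) : ℂ)) * (1/2) := by
    filter_upwards [hmem] with ζ hζ
    rw [hw ζ hζ, wDbar, key u ζ (hu0 ζ hζ), key u ζ (hu0 ζ hζ)]
    push_cast; ring
  have hA : ∀ a : ℂ, HasFDerivAt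
      (fun ζ => ((Real.sqrt (γ ζ) * fderiv ℝ u ζ a : ℝ) : ℂ)) _ z := fun a =>
    (Complex.ofRealCLM.hasFDerivAt (x := Real.sqrt (γ z) * fderiv ℝ u z a)).comp z
      (hs.fun_mul (hp a))
  have hV := (((hA 1).fun_sub ((hA Complex.I).const_mul Complex.I)).mul_const
    (1/2 : ℂ)).congr_of_eventuallyEq ev
  have hW := (((hA 1).fun_add ((hA Complex.I).const_mul Complex.I)).mul_const
    (1/2 : ℂ)).congr_of_eventuallyEq ew
  have hgz : γ z = Real.sqrt (γ z) * Real.sqrt (γ z) := hγs.self_of_nhds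
  rw [wDbar, wD, hV.fderiv, hW.fderiv, hq z hz, hv z hz, hw z hz]
  simp only [wD, wDbar, key u z (hu0 z hz), key _ z (hs0 z hz)]
  simp only [_root_.add_apply, _root_.sub_apply,
    _root_.smul_apply, ContinuousLinearMap.comp_apply,
    ContinuousLinearMap.flip_apply, smul_eq_mul, Complex.ofRealCLM_apply] at hc ⊢
  rw [hsym.symm]
  generalize Real.sqrt (γ z) = s at hc hgz hpos ⊢
  rw [hgz] at hc
  generalize fderiv ℝ (fun ζ => Real.sqrt (γ ζ)) z 1 = s1 at hc ⊢
  generalize fderiv ℝ (fun ζ => Real.sqrt (γ ζ)) z Complex.I = s2 at hc ⊢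
  generalize fderiv ℝ (fderiv ℝ u) z 1 1 = a at hc ⊢
  generalize fderiv ℝ (fderiv ℝ u) z 1 Complex.I = b at hc ⊢
  generalize fderiv ℝ (fderiv ℝ u) z Complex.I Complex.I = c at hc ⊢
  generalize fderiv ℝ u z 1 = p at hc ⊢
  generalize fderiv ℝ u z Complex.I = r at hc ⊢
  have hc2 : s * (a + c) = -2 * (s1 * p + s2 * r) := by
    apply mul_left_cancel₀ hpos.ne'
    linear_combination hc
  have hc3 : (s : ℂ) * (a + c) = -2 * (s1 * p + s2 * r) := by exact_mod_cast hc2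
  have hsne : (s : ℂ) ≠ 0 := by exact_mod_cast hpos.ne'
  have hI : Complex.I ^ 2 = -1 := Complex.I_sq
  constructor
  · rw [show ∀ X Y : ℂ, -(s : ℂ)⁻¹ * X * ((s : ℂ) * Y) = -(X * Y) by intro X Y; field_simp]
    push_cast
    linear_combination (1/4 : ℂ) * hc3 - (1/4 : ℂ) * (s * c + r * s2 + s2 * r) * hI
  · simp only [map_mul, map_neg, map_inv₀, map_div₀, map_sub, Complex.conj_ofReal, Complex.conj_I,
      map_ofNat]
    rw [show ∀ X Y : ℂ, -(s : ℂ)⁻¹ * X * ((s : ℂ) * Y) = -(X * Y) by intro X Y; field_simp]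
    push_cast
    linear_combination (1/4 : ℂ) * hc3 - (1/4 : ℂ) * (s * c + r * s2 + s2 * r) * hI
end

section
/- Let Ω ⊆ ℂ be open, let γ : ℂ → ℝ be continuously differentiable on Ω with γ(z) > 0 for all z ∈ Ω, and set q = −γ^{−1/2}·∂(γ^{1/2}) on Ω. Suppose v, w : ℂ → ℂ are continuously differentiable on Ω and satisfy ∂̄v = q·w and ∂w = conj(q)·v on Ω. Then the compatibility relation ∂̄(γ^{−1/2}·v) = ∂(γ^{−1/2}·w) holds on Ω. -/
open MeasureTheory Complex

/-- If `(v,w)` solves the first order system `∂̄v = q·w`, `∂w = conj(q)·v` with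
`q = −γ^{−1/2}∂(γ^{1/2})`, then the compatibility relation
`∂̄(γ^{−1/2}v) = ∂(γ^{−1/2}w)` holds. -/
theorem compatibility_relation
    (Ω : Set ℂ) (hΩ : IsOpen Ω) (γ : ℂ → ℝ)
    (hγ : ContDiffOn ℝ 1 γ Ω) (hγpos : ∀ z ∈ Ω, 0 < γ z)
    (q : ℂ → ℂ)
    (hq : ∀ z ∈ Ω, q z
      = -((Real.sqrt (γ z) : ℂ))⁻¹ * wD (fun ζ => (Real.sqrt (γ ζ) : ℂ)) z)
    (v w : ℂ → ℂ) (hv : ContDiffOn ℝ 1 v Ω) (hw : ContDiffOn ℝ 1 w Ω)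
    (h1 : ∀ z ∈ Ω, wDbar v z = q z * w z)
    (h2 : ∀ z ∈ Ω, wD w z = (starRingEnd ℂ) (q z) * v z) :
    ∀ z ∈ Ω,
      wDbar (fun ζ => ((Real.sqrt (γ ζ) : ℂ))⁻¹ * v ζ) z
        = wD (fun ζ => ((Real.sqrt (γ ζ) : ℂ))⁻¹ * w ζ) z := by
  intro z hz
  have hn : Ω ∈ nhds z := hΩ.mem_nhds hz
  have dγ : DifferentiableAt ℝ γ z := (hγ.differentiableOn one_ne_zero).differentiableAt hn
  have dv : DifferentiableAt ℝ v z := (hv.differentiableOn one_ne_zero).differentiableAt hn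
  have dw : DifferentiableAt ℝ w z := (hw.differentiableOn one_ne_zero).differentiableAt hn
  have ds : DifferentiableAt ℝ (fun ζ => Real.sqrt (γ ζ)) z := dγ.sqrt (hγpos z hz).ne'
  have hs : Real.sqrt (γ z) ≠ 0 := (Real.sqrt_pos.2 (hγpos z hz)).ne'
  have hsc : (Real.sqrt (γ z) : ℂ) ≠ 0 := by exact_mod_cast hs
  have hD := ds.hasFDerivAt
  have e1 := h1 z hz
  have e2 := h2 z hz
  have eq := hq z hz
  generalize fderiv ℝ (fun ζ => Real.sqrt (γ ζ)) z = D at hD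
  have hC : HasFDerivAt (fun ζ => (Real.sqrt (γ ζ) : ℂ)) (ofRealCLM.comp D) z :=
    ofRealCLM.hasFDerivAt.comp z hD
  have hI0 := (hasDerivAt_inv hs).comp_hasFDerivAt z hD
  have hI : HasFDerivAt (fun ζ => ((Real.sqrt (γ ζ) : ℂ))⁻¹)
      (ofRealCLM.comp (-(Real.sqrt (γ z) ^ 2)⁻¹ • D)) z := by
    have := ofRealCLM.hasFDerivAt.comp z hI0
    refine this.congr_of_eventuallyEq (Filter.Eventually.of_forall fun ζ => ?_)
    simp
  have hV := (hI.mul dv.hasFDerivAt).fderiv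
  have hW := (hI.mul dw.hasFDerivAt).fderiv
  have hV' : fderiv ℝ (fun ζ => ((Real.sqrt (γ ζ) : ℂ))⁻¹ * v ζ) z = _ := hV
  have hW' : fderiv ℝ (fun ζ => ((Real.sqrt (γ ζ) : ℂ))⁻¹ * w ζ) z = _ := hW
  unfold wD at eq e2 ⊢
  unfold wDbar at e1 ⊢
  rw [hC.fderiv] at eq
  rw [hV', hW']
  rw [eq] at e1 e2
  simp only [ContinuousLinearMap.comp_apply, ofRealCLM_apply, map_mul, map_neg, map_inv₀, map_sub,
    map_div₀, conj_ofReal, conj_I, map_ofNat] at e1 e2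
  simp only [ContinuousLinearMap.add_apply, ContinuousLinearMap.smul_apply, 
    ContinuousLinearMap.comp_apply, ofRealCLM_apply, smul_eq_mul, MulOpposite.smul_eq_mul_unop,
    MulOpposite.unop_op, ofReal_mul, ofReal_neg, ofReal_inv, ofReal_pow]
  generalize (Real.sqrt (γ z) : ℂ) = s at *
  have hss : (s ^ 2)⁻¹ = s⁻¹ * s⁻¹ := by rw [sq, mul_inv]
  rw [hss]
  linear_combination s⁻¹ * e1 - s⁻¹ * e2
end

section
/- Let Ω ⊆ ℂ be open, let γ : ℂ → ℝ be continuously differentiable on Ω with γ(z) > 0 for all z ∈ Ω, and set q = −γ^{−1/2}·∂(γ^{1/2}) on Ω. Suppose v, w : ℂ → ℂ are continuously differentiable on Ω with ∂̄v = q·w and ∂w = conj(q)·v on Ω, and suppose u : ℂ → ℂ is twice continuously differentiable on Ω with ∂u = γ^{−1/2}·v and ∂̄u = γ^{−1/2}·w on Ω. Then u solves the conductivity equation ∂ₓ(γ ∂ₓu) + ∂_y(γ ∂_yu) = 0 on Ω. -/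
open MeasureTheory Complex

/-- If `(v,w)` solves the first order system `∂̄v = q·w`, `∂w = conj(q)·v` with
`q = −γ^{−1/2}∂(γ^{1/2})`, and `u` satisfies `∂u = γ^{−1/2}v`, `∂̄u = γ^{−1/2}w`,
then `u` solves the conductivity equation `∇·γ∇u = 0`. -/
theorem first_order_system_to_conductivity
    (Ω : Set ℂ) (hΩ : IsOpen Ω) (γ : ℂ → ℝ)
    (hγ : ContDiffOn ℝ 1 γ Ω) (hγpos : ∀ z ∈ Ω, 0 < γ z)
    (q : ℂ → ℂ)
    (hq : ∀ z ∈ Ω, q z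
      = -((Real.sqrt (γ z) : ℂ))⁻¹ * wD (fun ζ => (Real.sqrt (γ ζ) : ℂ)) z)
    (v w : ℂ → ℂ) (hv : ContDiffOn ℝ 1 v Ω) (hw : ContDiffOn ℝ 1 w Ω)
    (h1 : ∀ z ∈ Ω, wDbar v z = q z * w z)
    (h2 : ∀ z ∈ Ω, wD w z = (starRingEnd ℂ) (q z) * v z)
    (u : ℂ → ℂ) (hu : ContDiffOn ℝ 2 u Ω)
    (hu1 : ∀ z ∈ Ω, wD u z = ((Real.sqrt (γ z) : ℂ))⁻¹ * v z)
    (hu2 : ∀ z ∈ Ω, wDbar u z = ((Real.sqrt (γ z) : ℂ))⁻¹ * w z) :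
    ∀ z ∈ Ω,
      fderiv ℝ (fun ζ => (γ ζ : ℂ) * fderiv ℝ u ζ 1) z 1
        + fderiv ℝ (fun ζ => (γ ζ : ℂ) * fderiv ℝ u ζ Complex.I) z Complex.I = 0 := by
  intro z hz
  have hnz : ∀ ζ ∈ Ω, ((Real.sqrt (γ ζ) : ℝ) : ℂ) ≠ 0 := fun ζ hζ => by
    have := Real.sqrt_pos.mpr (hγpos ζ hζ)
    exact_mod_cast this.ne'
  have hsq : ∀ ζ ∈ Ω, (γ ζ : ℂ) = (Real.sqrt (γ ζ) : ℂ) * (Real.sqrt (γ ζ) : ℂ) := fun ζ hζ => by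
    rw [← Complex.ofReal_mul, Real.mul_self_sqrt (hγpos ζ hζ).le]
  have hnhds : Ω ∈ nhds z := hΩ.mem_nhds hz
  have dγ : DifferentiableAt ℝ γ z := (hγ.differentiableOn one_ne_zero).differentiableAt hnhds
  have dv : DifferentiableAt ℝ v z := (hv.differentiableOn one_ne_zero).differentiableAt hnhds
  have dw : DifferentiableAt ℝ w z := (hw.differentiableOn one_ne_zero).differentiableAt hnhds
  have ds : DifferentiableAt ℝ (fun ζ => Real.sqrt (γ ζ)) z := dγ.sqrt (hγpos z hz).ne'
  have hS : HasFDerivAt (fun ζ => (Real.sqrt (γ ζ) : ℂ))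
      (Complex.ofRealCLM.comp (fderiv ℝ (fun ζ => Real.sqrt (γ ζ)) z)) z :=
    Complex.ofRealCLM.hasFDerivAt.comp z ds.hasFDerivAt
  have e1 : (fun ζ => (γ ζ : ℂ) * fderiv ℝ u ζ 1) =ᶠ[nhds z]
      (fun ζ => (Real.sqrt (γ ζ) : ℂ) * (v ζ + w ζ)) := by
    filter_upwards [hnhds] with ζ hζ
    have a := hu1 ζ hζ
    have b := hu2 ζ hζ
    have c : fderiv ℝ u ζ 1 = wD u ζ + wDbar u ζ := by unfold wD wDbar; ring
    have hn := hnz ζ hζ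
    rw [c, a, b, hsq ζ hζ]
    field_simp
  have e2 : (fun ζ => (γ ζ : ℂ) * fderiv ℝ u ζ Complex.I) =ᶠ[nhds z]
      (fun ζ => (Real.sqrt (γ ζ) : ℂ) * (Complex.I * (v ζ - w ζ))) := by
    filter_upwards [hnhds] with ζ hζ
    have a := hu1 ζ hζ
    have b := hu2 ζ hζ
    have c : fderiv ℝ u ζ Complex.I = Complex.I * (wD u ζ - wDbar u ζ) := by
      unfold wD wDbar
      linear_combination (fderiv ℝ u ζ Complex.I) * Complex.I_mul_I
    have hn := hnz ζ hζ
    rw [c, a, b, hsq ζ hζ]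
    field_simp
  rw [e1.fderiv_eq, e2.fderiv_eq]
  have f1 := hS.mul (dv.hasFDerivAt.add dw.hasFDerivAt)
  have f2 := hS.mul ((dv.hasFDerivAt.sub dw.hasFDerivAt).const_mul Complex.I)
  have g1 := f1.fderiv
  have g2 := f2.fderiv
  have hn := hnz z hz
  have A := h1 z hz
  have B := h2 z hz
  rw [hq z hz] at A B
  unfold wD wDbar at A
  unfold wD at B
  rw [hS.fderiv] at A B
  simp only [map_mul, map_neg, map_inv₀, map_sub, map_div₀, Complex.conj_ofReal, Complex.conj_I,
    ContinuousLinearMap.comp_apply, Complex.ofRealCLM_apply, map_ofNat] at A B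
  have g1' := congrArg (fun L => L 1) g1
  have g2' := congrArg (fun L => L Complex.I) g2
  refine (congrArg₂ (· + ·) g1' g2').trans ?_
  simp only [ContinuousLinearMap.add_apply, ContinuousLinearMap.sub_apply,
    ContinuousLinearMap.smul_apply, ContinuousLinearMap.comp_apply, Complex.ofRealCLM_apply,
    smul_eq_mul, Pi.add_apply, Pi.sub_apply]
  field_simp at A B
  linear_combination A + B
end

section
/- Let 0 < ε < 1 and let q : ℂ → ℂ be compactly supported and Hölder continuous with exponent ε (i.e. there is C ≥ 0 with |q(z) − q(z')| ≤ C|z − z'|^ε for all z, z'). Then for every r with 2 < r < ∞ and every k ∈ ℂ there exists exactly one quadruple of real-differentiable functions m₁₁, m₁₂, m₂₁, m₂₂ : ℂ → ℂ such that: (a) the system ∂̄m₁₁ = q·m₂₁, ∂m₂₁ + i·k·m₂₁ = conj(q)·m₁₁, ∂̄m₁₂ − i·k·m₁₂ = q·m₂₂, ∂m₂₂ = conj(q)·m₁₂ holds on all of ℂ; and (b) the functions m₁₁ − 1, m₁₂, m₂₁, m₂₂ − 1 all belong to L^r(ℂ) (with respect to Lebesgue measure) and are each Hölder continuous with exponent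 ε. -/
open MeasureTheory Complex

/-- `f` is Hölder continuous with exponent `ε`. -/
def IsHolder (ε : ℝ) (f : ℂ → ℂ) : Prop :=
  ∃ C ≥ (0 : ℝ), ∀ z z' : ℂ, ‖f z - f z'‖ ≤ C * ‖z - z'‖ ^ ε

/-! ### Elementary inequalities -/

lemma rpow_mul_rpow_le {x y α β : ℝ} (hx : 0 < x) (hy : 0 < y) (hα : 0 ≤ α) (hβ : 0 ≤ β) :
    x ^ (-α) * y ^ (-β) ≤ x ^ (-(α + β)) + y ^ (-(α + β)) := by
  have hx1 : x ^ (-(α + β)) = x ^ (-α) * x ^ (-β) := by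
    rw [← Real.rpow_add hx]; congr 1; ring
  have hy1 : y ^ (-(α + β)) = y ^ (-α) * y ^ (-β) := by
    rw [← Real.rpow_add hy]; congr 1; ring
  rcases le_total x y with h | h
  · have h1 : y ^ (-β) ≤ x ^ (-β) := Real.rpow_le_rpow_of_nonpos hx h (by linarith)
    have h2 : x ^ (-α) * y ^ (-β) ≤ x ^ (-α) * x ^ (-β) := by gcongr
    have : 0 ≤ y ^ (-(α + β)) := by positivity
    linarith
  · have h1 : x ^ (-α) ≤ y ^ (-α) := Real.rpow_le_rpow_of_nonpos hy h (by linarith)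
    have h2 : x ^ (-α) * y ^ (-β) ≤ y ^ (-α) * y ^ (-β) := by gcongr
    have : 0 ≤ x ^ (-(α + β)) := by positivity
    linarith

lemma kernel_ineq {x y h p δ : ℝ} (hx : 0 < x) (hy : 0 < y) (hh : 0 ≤ h) (hxy : h ≤ x + y)
    (hδ0 : 0 < δ) (hδ1 : δ < 1) (hp : 1 - δ ≤ p) :
    h ^ (1 - δ) * x ^ (-p) * y⁻¹ ≤ 2 * (x ^ (-(p + δ)) + y ^ (-(p + δ))) := by
  have h1 : h ^ (1 - δ) ≤ x ^ (1 - δ) + y ^ (1 - δ) :=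
    (Real.rpow_le_rpow hh hxy (by linarith)).trans
      (Real.rpow_add_le_add_rpow hx.le hy.le (by linarith) (by linarith))
  have e1 : x ^ (1 - δ) * x ^ (-p) = x ^ (-(p - 1 + δ)) := by
    rw [← Real.rpow_add hx]; congr 1; ring
  have e2 : y ^ (1 - δ) * y⁻¹ = y ^ (-δ) := by
    rw [← Real.rpow_neg_one, ← Real.rpow_add hy]; congr 1; ring
  have i1 := rpow_mul_rpow_le hx hy (α := p - 1 + δ) (β := 1) (by linarith) (by norm_num)
  have i2 := rpow_mul_rpow_le hx hy (α := p) (β := δ) (by linarith) (by linarith)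
  rw [show p - 1 + δ + 1 = p + δ by ring, Real.rpow_neg_one] at i1
  calc h ^ (1 - δ) * x ^ (-p) * y⁻¹ ≤ (x ^ (1 - δ) + y ^ (1 - δ)) * x ^ (-p) * y⁻¹ := by gcongr
    _ = (x ^ (1 - δ) * x ^ (-p)) * y⁻¹ + x ^ (-p) * (y ^ (1 - δ) * y⁻¹) := by ring
    _ = x ^ (-(p - 1 + δ)) * y⁻¹ + x ^ (-p) * y ^ (-δ) := by rw [e1, e2]
    _ ≤ _ := by linarith

/-! ### Riesz type potentials on discs -/

lemma potential_bound (γ R : ℝ) (hγ0 : 0 ≤ γ) (hγ : γ < 2) :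
    ∃ M ≥ (0 : ℝ), ∀ z : ℂ, IntegrableOn (fun w : ℂ => ‖z - w‖ ^ (-γ)) (Metric.closedBall 0 R) ∧
      ∫ w in Metric.closedBall (0 : ℂ) R, ‖z - w‖ ^ (-γ) ≤ M := by
  set g : ℂ → ℝ := (Metric.ball (0 : ℂ) 1).indicator (fun ζ => ‖ζ‖ ^ (-γ)) with hg
  have hmeas : Measurable (fun ζ : ℂ => ‖ζ‖ ^ (-γ)) := by fun_prop
  have hgi : Integrable g := by
    rw [hg, integrable_indicator_iff Metric.isOpen_ball.measurableSet]
    refine integrableOn_ball_of_norm_le_rpow (C := 1) (α := γ) (by simp) (by simpa using hγ) ?_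
      hmeas.aestronglyMeasurable
    refine Filter.Eventually.of_forall fun x => ?_
    rw [one_mul, Real.norm_of_nonneg (by positivity)]
  have hg0 : ∀ ζ, 0 ≤ g ζ := fun ζ => Set.indicator_nonneg (fun _ _ => by positivity) _
  have hle : ∀ ζ, ‖ζ‖ ^ (-γ) ≤ g ζ + 1 := by
    intro ζ
    by_cases h : ζ ∈ Metric.ball (0 : ℂ) 1
    · simp [hg, Set.indicator_of_mem h]
    · have : ‖ζ‖ ^ (-γ) ≤ 1 := Real.rpow_le_one_of_one_le_of_nonpos
        (by simpa using h) (by linarith)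
      linarith [hg0 ζ]
  have hone : IntegrableOn (fun _ : ℂ => (1 : ℝ)) (Metric.closedBall (0 : ℂ) R) :=
    integrableOn_const (by exact (measure_closedBall_lt_top).ne)
  refine ⟨(∫ ζ, g ζ) + ∫ w in Metric.closedBall (0 : ℂ) R, (1 : ℝ), ?_, fun z => ?_⟩
  · have := integral_nonneg (f := g) (μ := volume) hg0
    have h2 : 0 ≤ ∫ w in Metric.closedBall (0 : ℂ) R, (1 : ℝ) := integral_nonneg fun _ => by simp
    exact add_nonneg this h2
  · have hgz : Integrable (fun w => g (z - w)) := hgi.comp_sub_left z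
    have hi : IntegrableOn (fun w => g (z - w) + 1) (Metric.closedBall (0 : ℂ) R) :=
      hgz.integrableOn.add hone
    have hi2 : IntegrableOn (fun w : ℂ => ‖z - w‖ ^ (-γ)) (Metric.closedBall 0 R) := by
      refine hi.mono' (hmeas.comp (measurable_const.sub measurable_id)).aestronglyMeasurable (Filter.Eventually.of_forall fun w => ?_)
      rw [Real.norm_of_nonneg (by positivity)]
      exact hle _
    refine ⟨hi2, ?_⟩
    calc ∫ w in Metric.closedBall (0 : ℂ) R, ‖z - w‖ ^ (-γ)
        ≤ ∫ w in Metric.closedBall (0 : ℂ) R, (g (z - w) + 1) :=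
          integral_mono hi2 hi fun w => hle _
      _ = (∫ w in Metric.closedBall (0 : ℂ) R, g (z - w)) +
          ∫ w in Metric.closedBall (0 : ℂ) R, (1 : ℝ) := integral_add hgz.integrableOn hone
      _ ≤ _ := by
          gcongr
          calc _ ≤ ∫ w, g (z - w) :=
                setIntegral_le_integral hgz (Filter.Eventually.of_forall fun w => hg0 _)
            _ = _ := integral_sub_left_eq_self g volume z

lemma two_pole_bound (γ R : ℝ) (hγ0 : 0 ≤ γ) (hγ : γ < 2) :
    ∃ M ≥ (0 : ℝ), ∀ (a b : ℂ) (F : ℂ → ℂ) (A : ℝ), AEStronglyMeasurable F volume →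
      (∀ w, w ≠ a → w ≠ b → ‖w‖ ≤ R → ‖F w‖ ≤ A * (‖a - w‖ ^ (-γ) + ‖b - w‖ ^ (-γ))) →
      (∀ w, R < ‖w‖ → F w = 0) → 0 ≤ A → Integrable F ∧ ‖∫ w, F w‖ ≤ M * A := by
  obtain ⟨M, hM0, hM⟩ := potential_bound γ R hγ0 hγ
  refine ⟨2 * M, by positivity, fun a b F A hF hb hs hA => ?_⟩
  have hi : IntegrableOn (fun w => A * (‖a - w‖ ^ (-γ) + ‖b - w‖ ^ (-γ)))
      (Metric.closedBall (0 : ℂ) R) := ((hM a).1.add (hM b).1).const_mul A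
  have hae : ∀ᵐ w : ℂ ∂(volume.restrict (Metric.closedBall (0 : ℂ) R)),
      ‖F w‖ ≤ A * (‖a - w‖ ^ (-γ) + ‖b - w‖ ^ (-γ)) := by
    rw [ae_restrict_iff' Metric.isClosed_closedBall.measurableSet]
    have h1 : ∀ᵐ w : ℂ, w ≠ a := by simp [ae_iff]
    have h2 : ∀ᵐ w : ℂ, w ≠ b := by simp [ae_iff]
    filter_upwards [h1, h2] with w w1 w2 hw
    exact hb w w1 w2 (by simpa using hw)
  have hFi : IntegrableOn F (Metric.closedBall (0 : ℂ) R) := hi.mono' hF.restrict hae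
  have hsupp : Function.support F ⊆ Metric.closedBall (0 : ℂ) R := by
    intro w hw
    by_contra h
    exact hw (hs w (by simpa using h))
  refine ⟨(integrableOn_iff_integrable_of_support_subset hsupp).1 hFi, ?_⟩
  rw [← setIntegral_eq_integral_of_forall_compl_eq_zero (s := Metric.closedBall (0 : ℂ) R)
    (fun w hw => hs w (by simpa using hw))]
  calc _ ≤ ∫ w in Metric.closedBall (0 : ℂ) R, A * (‖a - w‖ ^ (-γ) + ‖b - w‖ ^ (-γ)) :=
        norm_integral_le_of_norm_le hi hae
    _ = A * ((∫ w in Metric.closedBall (0 : ℂ) R, ‖a - w‖ ^ (-γ)) +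
          ∫ w in Metric.closedBall (0 : ℂ) R, ‖b - w‖ ^ (-γ)) := by
        rw [integral_const_mul, integral_add (hM a).1 (hM b).1]
    _ ≤ A * (M + M) := by gcongr; exacts [(hM a).2, (hM b).2]
    _ = _ := by ring


/-! ### The Cauchy transform -/

/-- The Cauchy transform. -/
noncomputable def cauchyT (f : ℂ → ℂ) (z : ℂ) : ℂ :=
  (Real.pi : ℂ)⁻¹ * ∫ w, f w * (z - w)⁻¹

/-- Measurable functions bounded by `B` and vanishing outside the disc of radius `R`. -/
structure Adm (R B : ℝ) (f : ℂ → ℂ) : Prop where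
  meas : AEStronglyMeasurable f volume
  bd : ∀ w, ‖f w‖ ≤ B
  supp : ∀ w, R < ‖w‖ → f w = 0

lemma Adm.nonneg {R B : ℝ} {f : ℂ → ℂ} (hf : Adm R B f) : 0 ≤ B :=
  (norm_nonneg _).trans (hf.bd 0)

lemma Adm.meas_kernel {R B : ℝ} {f : ℂ → ℂ} (hf : Adm R B f) (z : ℂ) :
    AEStronglyMeasurable (fun w => f w * (z - w)⁻¹) volume :=
  hf.meas.mul (by fun_prop : Measurable fun w : ℂ => (z - w)⁻¹).aestronglyMeasurable

lemma cauchyT_int_bound (R : ℝ) : ∃ M ≥ (0 : ℝ), ∀ (f : ℂ → ℂ) (B : ℝ), Adm R B f → ∀ z,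
    Integrable (fun w => f w * (z - w)⁻¹) ∧ ‖∫ w, f w * (z - w)⁻¹‖ ≤ M * B := by
  obtain ⟨M, hM0, hM⟩ := two_pole_bound 1 R (by norm_num) (by norm_num)
  refine ⟨M, hM0, fun f B hf z => hM z z _ B (hf.meas_kernel z) ?_ ?_ hf.nonneg⟩
  · intro w _ _ _
    rw [norm_mul, norm_inv, Real.rpow_neg_one]
    have := hf.bd w
    have h0 : 0 ≤ ‖z - w‖⁻¹ := by positivity
    have hB := hf.nonneg
    calc _ ≤ B * ‖z - w‖⁻¹ := by gcongr
      _ ≤ _ := by gcongr; linarith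
  · intro w hw; simp [hf.supp w hw]

lemma Adm.integrable_kernel {R B : ℝ} {f : ℂ → ℂ} (hf : Adm R B f) (z : ℂ) :
    Integrable (fun w => f w * (z - w)⁻¹) := by
  obtain ⟨M, _, hM⟩ := cauchyT_int_bound R
  exact (hM f B hf z).1

lemma Adm.integrable {R B : ℝ} {f : ℂ → ℂ} (hf : Adm R B f) : Integrable f := by
  obtain ⟨M, hM0, hM⟩ := two_pole_bound 0 R (by norm_num) (by norm_num)
  refine (hM 0 0 f B hf.meas ?_ hf.supp hf.nonneg).1
  intro w _ _ _
  have := hf.bd w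
  have := hf.nonneg
  simp; linarith

lemma cauchyT_bound (R : ℝ) : ∃ M ≥ (0 : ℝ), ∀ (f : ℂ → ℂ) (B : ℝ), Adm R B f → ∀ z,
    ‖cauchyT f z‖ ≤ M * B := by
  obtain ⟨M, hM0, hM⟩ := cauchyT_int_bound R
  refine ⟨Real.pi⁻¹ * M, by positivity, fun f B hf z => ?_⟩
  rw [cauchyT, norm_mul, norm_inv, Complex.norm_real, Real.norm_of_nonneg Real.pi_pos.le, mul_assoc]
  gcongr
  exact (hM f B hf z).2

lemma cauchyT_decay (R : ℝ) (hR : 0 ≤ R) : ∃ M ≥ (0 : ℝ), ∀ (f : ℂ → ℂ) (B : ℝ), Adm R B f → ∀ z,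
    (1 + ‖z‖) * ‖cauchyT f z‖ ≤ M * B := by
  obtain ⟨M1, hM1, h1⟩ := cauchyT_bound R
  obtain ⟨M2, hM2, h2⟩ := cauchyT_int_bound R
  obtain ⟨M3, hM3, h3⟩ := two_pole_bound 0 R (by norm_num) (by norm_num)
  refine ⟨M1 + Real.pi⁻¹ * (M3 + M2 * R), by positivity, fun f B hf z => ?_⟩
  have hB := hf.nonneg
  have hg : Adm R (R * B) (fun w => w * f w) := by
    refine ⟨by have := hf.meas; fun_prop, fun w => ?_, fun w hw => by simp [hf.supp w hw]⟩
    rw [norm_mul]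
    by_cases hw : R < ‖w‖
    · rw [hf.supp w hw]; simp; positivity
    · have := hf.bd w
      gcongr
      linarith
  have hI3 : ‖∫ w, f w‖ ≤ M3 * B := by
    refine (h3 0 0 f B hf.meas ?_ hf.supp hf.nonneg).2
    intro w _ _ _
    have := hf.bd w
    simp; linarith
  have key : z * cauchyT f z = (Real.pi : ℂ)⁻¹ * ((∫ w, f w) + ∫ w, w * f w * (z - w)⁻¹) := by
    rw [cauchyT, ← integral_add hf.integrable (hg.integrable_kernel z), mul_left_comm,
      ← integral_const_mul]
    congr 1
    apply integral_congr_ae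
    have hne : ∀ᵐ w : ℂ, w ≠ z := by simp [ae_iff]
    filter_upwards [hne] with w hw
    have : z - w ≠ 0 := sub_ne_zero.2 hw.symm
    field_simp
    ring
  have hz : ‖z‖ * ‖cauchyT f z‖ ≤ Real.pi⁻¹ * (M3 * B + M2 * (R * B)) := by
    rw [← norm_mul, key, norm_mul, norm_inv, Complex.norm_real, Real.norm_of_nonneg Real.pi_pos.le]
    gcongr
    refine (norm_add_le _ _).trans ?_
    gcongr
    exact (h2 _ _ hg z).2
  have := h1 f B hf z
  calc (1 + ‖z‖) * ‖cauchyT f z‖ = ‖cauchyT f z‖ + ‖z‖ * ‖cauchyT f z‖ := by ring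
    _ ≤ M1 * B + Real.pi⁻¹ * (M3 * B + M2 * (R * B)) := by gcongr
    _ = _ := by ring

lemma cauchyT_holder (R ε : ℝ) (h0 : 0 < ε) (h1 : ε < 1) : ∃ M ≥ (0 : ℝ),
    ∀ (f : ℂ → ℂ) (B : ℝ), Adm R B f → ∀ z z',
    ‖cauchyT f z - cauchyT f z'‖ ≤ M * B * ‖z - z'‖ ^ ε := by
  obtain ⟨M, hM0, hM⟩ := two_pole_bound (1 + ε) R (by linarith) (by linarith)
  refine ⟨Real.pi⁻¹ * M * 2, by positivity, fun f B hf z z' => ?_⟩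
  have hB := hf.nonneg
  have hi1 := hf.integrable_kernel z
  have hi2 := hf.integrable_kernel z'
  rw [cauchyT, cauchyT, ← mul_sub, ← integral_sub hi1 hi2, norm_mul, norm_inv, Complex.norm_real,
    Real.norm_of_nonneg Real.pi_pos.le]
  have := (hM z z' (fun w => f w * (z - w)⁻¹ - f w * (z' - w)⁻¹) (2 * B * ‖z - z'‖ ^ ε)
    (hi1.1.sub hi2.1) ?_ (fun w hw => by simp [hf.supp w hw]) (by positivity)).2
  · calc _ ≤ Real.pi⁻¹ * (M * (2 * B * ‖z - z'‖ ^ ε)) := by gcongr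
      _ = _ := by ring
  intro w hw1 hw2 _
  have hz1 : z - w ≠ 0 := sub_ne_zero.2 hw1.symm
  have hz2 : z' - w ≠ 0 := sub_ne_zero.2 hw2.symm
  have e : f w * (z - w)⁻¹ - f w * (z' - w)⁻¹ = f w * ((z' - z) * (z - w)⁻¹ * (z' - w)⁻¹) := by
    field_simp
    ring
  rw [e, norm_mul, norm_mul, norm_mul, norm_inv, norm_inv, norm_sub_rev z' z]
  have hx : 0 < ‖z - w‖ := norm_pos_iff.2 hz1
  have hy : 0 < ‖z' - w‖ := norm_pos_iff.2 hz2
  have hxy : ‖z - z'‖ ≤ ‖z - w‖ + ‖z' - w‖ := by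
    rw [norm_sub_rev z' w]; exact norm_sub_le_norm_sub_add_norm_sub _ _ _
  have hk := kernel_ineq hx hy (norm_nonneg (z - z')) hxy h0 h1 (p := 1) (by linarith)
  have hs : ‖z - z'‖ = ‖z - z'‖ ^ ε * ‖z - z'‖ ^ (1 - ε) := by
    rcases (norm_nonneg (z - z')).eq_or_lt with h | h
    · rw [← h, Real.zero_rpow h0.ne']; simp
    · rw [← Real.rpow_add h]; simp
  rw [Real.rpow_neg_one] at hk
  calc ‖f w‖ * (‖z - z'‖ * ‖z - w‖⁻¹ * ‖z' - w‖⁻¹)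
      ≤ B * (‖z - z'‖ * ‖z - w‖⁻¹ * ‖z' - w‖⁻¹) := by gcongr; exact hf.bd w
    _ = B * ‖z - z'‖ ^ ε * (‖z - z'‖ ^ (1 - ε) * ‖z - w‖⁻¹ * ‖z' - w‖⁻¹) := by
        conv_lhs => rw [hs]
        ring
    _ ≤ B * ‖z - z'‖ ^ ε * (2 * (‖z - w‖ ^ (-(1 + ε)) + ‖z' - w‖ ^ (-(1 + ε)))) := by gcongr
    _ = _ := by ring

lemma cauchyT_add {R B R' B' : ℝ} {f g : ℂ → ℂ} (hf : Adm R B f) (hg : Adm R' B' g) (z : ℂ) :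
    cauchyT (fun w => f w + g w) z = cauchyT f z + cauchyT g z := by
  simp only [cauchyT, add_mul]
  rw [integral_add (hf.integrable_kernel z) (hg.integrable_kernel z), mul_add]

lemma cauchyT_const_mul (c : ℂ) (f : ℂ → ℂ) (z : ℂ) :
    cauchyT (fun w => c * f w) z = c * cauchyT f z := by
  simp only [cauchyT, mul_assoc]
  rw [integral_const_mul]
  ring


/-! ### The Cauchy transform of the indicator of the unit disc -/

lemma circle_kernel_integral {z : ℂ} (hz : z ≠ 0) {ρ : ℝ} (hρ : 0 < ρ) (hne : ρ ≠ ‖z‖) :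
    ∫ θ in (0 : ℝ)..(2 * Real.pi), (z - circleMap 0 ρ θ)⁻¹ =
      if ρ < ‖z‖ then 2 * Real.pi * z⁻¹ else 0 := by
  have hc0 : ∀ θ, circleMap 0 ρ θ ≠ 0 := fun θ => by simp [circleMap, hρ.ne']
  have hcz : ∀ θ, circleMap 0 ρ θ - z ≠ 0 := by
    intro θ h
    have : ‖circleMap 0 ρ θ‖ = ‖z‖ := by rw [sub_eq_zero.1 h]
    rw [norm_circleMap_zero, abs_of_pos hρ] at this
    exact hne this
  have e : ∀ θ : ℝ, (z - circleMap 0 ρ θ)⁻¹ =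
      (z⁻¹ * I⁻¹) * (deriv (circleMap 0 ρ) θ • ((circleMap 0 ρ θ - 0)⁻¹ - (circleMap 0 ρ θ - z)⁻¹)) := by
    intro θ
    have h1 := hc0 θ
    have h2 := hcz θ
    have h3 : z - circleMap 0 ρ θ ≠ 0 := by rw [← neg_sub]; exact neg_ne_zero.2 h2
    rw [deriv_circleMap]
    simp only [smul_eq_mul, sub_zero]
    have h4 : (z - circleMap 0 ρ θ)⁻¹ = -(circleMap 0 ρ θ - z)⁻¹ := by
      rw [← inv_neg, neg_sub]
    rw [h4]
    field_simp
    ring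
  have hci : ∀ a : ℂ, a ∉ Metric.sphere (0 : ℂ) |ρ| →
      CircleIntegrable (fun w => (w - a)⁻¹) 0 ρ := by
    intro a ha
    rw [circleIntegrable_sub_inv_iff]
    exact Or.inr ha
  have hci0 := hci 0 (by simp [eq_comm, hρ.ne'])
  have hciz := hci z (by simp [abs_of_pos hρ]; exact fun h => hne h.symm)
  have : ∫ θ in (0 : ℝ)..(2 * Real.pi), (z - circleMap 0 ρ θ)⁻¹ =
      (z⁻¹ * I⁻¹) * ((∮ w in C(0, ρ), (w - 0)⁻¹) - ∮ w in C(0, ρ), (w - z)⁻¹) := by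
    rw [← circleIntegral.integral_sub hci0 hciz, circleIntegral, ← intervalIntegral.integral_const_mul]
    exact intervalIntegral.integral_congr fun θ _ => e θ
  rw [this, circleIntegral.integral_sub_inv_of_mem_ball (by simpa using hρ)]
  split_ifs with h
  · rw [Complex.circleIntegral_eq_zero_of_differentiable_on_off_countable hρ.le Set.countable_empty]
    · field_simp
      ring
    · intro w hw
      have : w - z ≠ 0 := by
        intro h'
        rw [sub_eq_zero.1 h'] at hw
        simp at hw; linarith
      fun_prop (disch := exact this)
    · intro w hw
      have : w - z ≠ 0 := by
        intro h'
        rw [sub_eq_zero.1 h'] at hw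
        simp at hw; linarith
      fun_prop (disch := exact this)
  · rw [circleIntegral.integral_sub_inv_of_mem_ball]
    · simp
    · have : ‖z‖ < ρ := lt_of_le_of_ne (not_lt.1 h) hne.symm
      simpa using this

lemma disc_adm (z0 : ℂ) : Adm (‖z0‖ + 1) 1 ((Metric.ball z0 1).indicator fun _ => (1 : ℂ)) := by
  refine ⟨?_, fun w => ?_, fun w hw => ?_⟩
  · exact (measurable_const.indicator Metric.isOpen_ball.measurableSet).aestronglyMeasurable
  · by_cases h : w ∈ Metric.ball z0 1 <;> simp [h]
  · apply Set.indicator_of_notMem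
    intro h
    have h1 : ‖w - z0‖ < 1 := by simpa [dist_eq_norm] using h
    have h2 := norm_sub_norm_le w z0
    linarith

lemma cauchyT_disc {z : ℂ} (hz1 : ‖z‖ < 1) :
    cauchyT ((Metric.ball 0 1).indicator fun _ => (1 : ℂ)) z = (starRingEnd ℂ) z := by
  have hadm := disc_adm 0
  have hmain : ∀ z : ℂ, z ≠ 0 → ‖z‖ < 1 →
      cauchyT ((Metric.ball 0 1).indicator fun _ => (1 : ℂ)) z = (starRingEnd ℂ) z := by
    intro z hz hz1
    have hkerInt := hadm.integrable_kernel z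
    set F : ℂ → ℂ := fun w => ((Metric.ball 0 1).indicator (fun _ => (1 : ℂ)) w) * (z - w)⁻¹ with hF
    have hz0 : 0 < ‖z‖ := norm_pos_iff.2 hz
    have hpi : ∫ w, F w = Real.pi * (starRingEnd ℂ) z := by
      have hint2 : IntegrableOn (fun p : ℝ × ℝ => p.1 • F (Complex.polarCoord.symm p))
          (Set.Ioi (0 : ℝ) ×ˢ Set.Ioo (-Real.pi) Real.pi) := by
        have hFm : Measurable F :=
          (measurable_const.indicator Metric.isOpen_ball.measurableSet).mul (by fun_prop)
        have hsm : Measurable (fun p : ℝ × ℝ => Complex.polarCoord.symm p) := by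
          simp only [Complex.polarCoord_symm_apply]
          fun_prop
        have hm : Measurable (fun p : ℝ × ℝ => p.1 • F (Complex.polarCoord.symm p)) :=
          measurable_fst.smul (hFm.comp hsm)
        refine ⟨hm.aestronglyMeasurable, ?_⟩
        have h1 := Complex.lintegral_comp_polarCoord_symm (fun w => ‖F w‖ₑ)
        have h2 : ∫⁻ w, ‖F w‖ₑ < ⊤ := hkerInt.2
        rw [← h1, polarCoord_target] at h2
        refine lt_of_le_of_lt (le_of_eq ?_) h2
        refine setLIntegral_congr_fun (measurableSet_Ioi.prod measurableSet_Ioo) fun p hp => ?_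
        have hp1 : 0 < p.1 := hp.1
        simp only [enorm_smul, smul_eq_mul]
        rw [Real.enorm_eq_ofReal hp1.le]
      rw [← Complex.integral_comp_polarCoord_symm, polarCoord_target, Measure.volume_eq_prod,
        setIntegral_prod _ hint2]
      have hinner : ∀ᵐ ρ : ℝ, ρ ∈ Set.Ioi (0 : ℝ) →
          ∫ θ in Set.Ioo (-Real.pi) Real.pi, ρ • F (Complex.polarCoord.symm (ρ, θ)) =
            (Set.Ioo 0 ‖z‖).indicator (fun ρ : ℝ => (ρ : ℂ) * (2 * Real.pi * z⁻¹)) ρ := by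
        have hne : ∀ᵐ ρ : ℝ, ρ ≠ ‖z‖ := by simp [ae_iff]
        filter_upwards [hne] with ρ hρ hρ0
        have hρ0 : 0 < ρ := hρ0
        have e1 : ∀ θ : ℝ, Complex.polarCoord.symm (ρ, θ) = circleMap 0 ρ θ := by
          intro θ
          simp [circleMap, Complex.exp_mul_I]
        simp only [e1]
        rw [integral_smul, ← integral_Ioc_eq_integral_Ioo,
          ← intervalIntegral.integral_of_le (by linarith [Real.pi_pos])]
        have hper : Function.Periodic (fun θ => F (circleMap 0 ρ θ)) (2 * Real.pi) := by
          intro θ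
          simp only [periodic_circleMap 0 ρ θ]
        have := hper.intervalIntegral_add_eq (-Real.pi) 0
        rw [show -Real.pi + 2 * Real.pi = Real.pi by ring, zero_add] at this
        rw [this]
        by_cases h1 : ρ < 1
        · have e2 : ∀ θ, F (circleMap 0 ρ θ) = (z - circleMap 0 ρ θ)⁻¹ := by
            intro θ
            simp [hF, abs_of_pos hρ0, h1]
          simp only [e2]
          rw [circle_kernel_integral hz hρ0 hρ]
          by_cases h2 : ρ < ‖z‖ <;> simp [h2, hρ0]
        · have e2 : ∀ θ, F (circleMap 0 ρ θ) = 0 := by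
            intro θ
            simp [hF, abs_of_pos hρ0, h1]
          have h2 : ¬ ρ < ‖z‖ := by linarith
          simp [e2, h2]
      rw [setIntegral_congr_ae measurableSet_Ioi hinner, setIntegral_indicator measurableSet_Ioo,
        Set.inter_eq_right.2 Set.Ioo_subset_Ioi_self, ← integral_Ioc_eq_integral_Ioo,
        ← intervalIntegral.integral_of_le hz0.le, intervalIntegral.integral_mul_const]
      have : ∫ x in (0 : ℝ)..‖z‖, (x : ℂ) = ((‖z‖ ^ 2 / 2 : ℝ) : ℂ) := by
        rw [intervalIntegral.integral_ofReal, integral_id]; simp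
      rw [this]
      have h3 : ((‖z‖ ^ 2 : ℝ) : ℂ) = z * (starRingEnd ℂ) z := by
        rw [Complex.mul_conj, Complex.normSq_eq_norm_sq]
      push_cast at h3 ⊢
      rw [h3]
      field_simp
    rw [cauchyT, hpi]
    have : (Real.pi : ℂ) ≠ 0 := by exact_mod_cast Real.pi_ne_zero
    field_simp
  by_cases hz : z = 0
  · subst hz
    have hodd := integral_neg_eq_self (fun w : ℂ =>
      ((Metric.ball 0 1).indicator (fun _ => (1 : ℂ)) w) * (0 - w)⁻¹) volume
    have e : ∀ w : ℂ, ((Metric.ball 0 1).indicator (fun _ => (1 : ℂ)) (-w)) * (0 - -w)⁻¹ =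
        -(((Metric.ball 0 1).indicator (fun _ => (1 : ℂ)) w) * (0 - w)⁻¹) := by
      intro w
      have : (Metric.ball (0 : ℂ) 1).indicator (fun _ => (1 : ℂ)) (-w) =
          (Metric.ball (0 : ℂ) 1).indicator (fun _ => (1 : ℂ)) w := by
        simp [Set.indicator]
      rw [this]
      simp [inv_neg]
    simp only [e, integral_neg] at hodd
    rw [cauchyT, map_zero, self_eq_neg.1 hodd.symm, mul_zero]
  · exact hmain z hz hz1


/-! ### Differentiability of the Cauchy transform of Hölder functions -/

lemma cauchyT_disc_at (z0 : ℂ) {h : ℂ} (hh : ‖h‖ < 1) :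
    cauchyT ((Metric.ball z0 1).indicator fun _ => (1 : ℂ)) (z0 + h) = (starRingEnd ℂ) h := by
  rw [← cauchyT_disc hh, cauchyT, cauchyT]
  congr 1
  rw [← integral_add_right_eq_self _ z0]
  congr 1
  ext w
  have : (Metric.ball z0 1).indicator (fun _ => (1 : ℂ)) (w + z0) =
      (Metric.ball (0 : ℂ) 1).indicator (fun _ => (1 : ℂ)) w := by
    simp [Set.indicator, dist_eq_norm]
  rw [this]
  congr 2
  ring

lemma hasDerivAt_of_rpow_bound {F : ℂ → ℂ} {c z0 : ℂ} {K δ : ℝ} (hδ : 0 < δ)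
    (hF : ∀ h, ‖F (z0 + h) - F z0 - h * c‖ ≤ K * ‖h‖ ^ (1 + δ)) : HasDerivAt F c z0 := by
  rw [hasDerivAt_iff_isLittleO_nhds_zero, Asymptotics.isLittleO_iff]
  intro η hη
  have ht : Filter.Tendsto (fun h : ℂ => K * ‖h‖ ^ δ) (nhds 0) (nhds 0) := by
    have : Continuous fun h : ℂ => K * ‖h‖ ^ δ := by
      have : Continuous fun h : ℂ => ‖h‖ ^ δ := continuous_norm.rpow_const fun _ => Or.inr hδ.le
      fun_prop
    simpa [Real.zero_rpow hδ.ne'] using this.tendsto 0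
  filter_upwards [ht.eventually (gt_mem_nhds hη)] with h hh
  rw [smul_eq_mul]
  refine (hF h).trans ?_
  rcases (norm_nonneg h).eq_or_lt with h0 | h0
  · rw [← h0, Real.zero_rpow (by linarith)]; simp
  · rw [Real.rpow_add h0, Real.rpow_one]
    calc K * (‖h‖ * ‖h‖ ^ δ) = (K * ‖h‖ ^ δ) * ‖h‖ := by ring
      _ ≤ η * ‖h‖ := by gcongr

lemma hasDerivAt_cauchyT_of_vanish {R B A ε : ℝ} {g : ℂ → ℂ} {z0 : ℂ} (hε0 : 0 < ε) (hε1 : ε < 1)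
    (hg : Adm R B g) (hA : 0 ≤ A) (hgz : ∀ w, ‖g w‖ ≤ A * ‖z0 - w‖ ^ ε) :
    ∃ c, HasDerivAt (cauchyT g) c z0 := by
  obtain ⟨M1, hM1, h1⟩ := two_pole_bound (2 - ε) R (by linarith) (by linarith)
  obtain ⟨M, hM0, hM⟩ := two_pole_bound (2 - ε + ε / 2) R (by linarith) (by linarith)
  have hm : AEStronglyMeasurable (fun w => g w * ((z0 - w)⁻¹) ^ 2) volume :=
    hg.meas.mul (by fun_prop : Measurable fun w : ℂ => ((z0 - w)⁻¹) ^ 2).aestronglyMeasurable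
  have hbd : ∀ w, w ≠ z0 → ‖g w * ((z0 - w)⁻¹) ^ 2‖ ≤ A * ‖z0 - w‖ ^ (-(2 - ε)) := by
    intro w hw
    have hx : 0 < ‖z0 - w‖ := norm_pos_iff.2 (sub_ne_zero.2 hw.symm)
    have e : ‖z0 - w‖ ^ (-(2 - ε)) = ‖z0 - w‖ ^ ε * (‖z0 - w‖⁻¹) ^ 2 := by
      rw [show -(2 - ε) = ε + (-2 : ℝ) by ring, Real.rpow_add hx, Real.rpow_neg hx.le, inv_pow]
      norm_num
    rw [norm_mul, norm_pow, norm_inv, e, ← mul_assoc]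
    gcongr
    exact hgz w
  have hi : Integrable (fun w => g w * ((z0 - w)⁻¹) ^ 2) := by
    refine (h1 z0 z0 _ A hm ?_ (fun w hw => by simp [hg.supp w hw]) hA).1
    intro w hw _ _
    refine (hbd w hw).trans ?_
    gcongr
    have : 0 ≤ ‖z0 - w‖ ^ (-(2 - ε)) := by positivity
    linarith
  refine ⟨-((Real.pi : ℂ)⁻¹ * ∫ w, g w * ((z0 - w)⁻¹) ^ 2),
    hasDerivAt_of_rpow_bound (K := Real.pi⁻¹ * (M * (2 * A))) (δ := ε / 2) (by positivity) ?_⟩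
  intro h
  have ia := hg.integrable_kernel (z0 + h)
  have ib := hg.integrable_kernel z0
  have ic := hi.const_mul h
  have iab : Integrable (fun w => g w * (z0 + h - w)⁻¹ - g w * (z0 - w)⁻¹) := ia.sub ib
  have iabc : Integrable (fun w => g w * (z0 + h - w)⁻¹ - g w * (z0 - w)⁻¹ +
    h * (g w * ((z0 - w)⁻¹) ^ 2)) := iab.add ic
  have e : cauchyT g (z0 + h) - cauchyT g z0 - h * -((Real.pi : ℂ)⁻¹ * ∫ w, g w * ((z0 - w)⁻¹) ^ 2)
      = (Real.pi : ℂ)⁻¹ * ∫ w, (g w * (z0 + h - w)⁻¹ - g w * (z0 - w)⁻¹ +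
        h * (g w * ((z0 - w)⁻¹) ^ 2)) := by
    rw [integral_add iab ic, integral_sub ia ib, integral_const_mul, cauchyT, cauchyT]
    ring
  rw [e, norm_mul, norm_inv, Complex.norm_real, Real.norm_of_nonneg Real.pi_pos.le, mul_assoc]
  gcongr
  rw [mul_assoc]
  refine (hM z0 (z0 + h) _ (2 * A * ‖h‖ ^ (1 + ε / 2)) iabc.1 ?_
    (fun w hw => by simp [hg.supp w hw]) (by positivity)).2
  intro w hw1 hw2 _
  have hz1 : z0 - w ≠ 0 := sub_ne_zero.2 hw1.symm
  have hz2 : z0 + h - w ≠ 0 := sub_ne_zero.2 hw2.symm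
  have e2 : g w * (z0 + h - w)⁻¹ - g w * (z0 - w)⁻¹ + h * (g w * ((z0 - w)⁻¹) ^ 2) =
      (g w * ((z0 - w)⁻¹) ^ 2) * (h ^ 2 * (z0 + h - w)⁻¹) := by
    field_simp
    ring
  have hx : 0 < ‖z0 - w‖ := norm_pos_iff.2 hz1
  have hy : 0 < ‖z0 + h - w‖ := norm_pos_iff.2 hz2
  have hxy : ‖h‖ ≤ ‖z0 - w‖ + ‖z0 + h - w‖ := by
    have := norm_sub_le (z0 + h - w) (z0 - w)
    rw [show z0 + h - w - (z0 - w) = h by ring] at this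
    linarith
  have hk := kernel_ineq hx hy (norm_nonneg h) hxy (δ := ε / 2) (p := 2 - ε) (by linarith)
    (by linarith) (by linarith)
  have hs : ‖h‖ ^ 2 = ‖h‖ ^ (1 + ε / 2) * ‖h‖ ^ (1 - ε / 2) := by
    rw [← Real.rpow_add_of_nonneg (norm_nonneg h) (by linarith) (by linarith),
      ← Real.rpow_natCast]
    congr 1
    push_cast
    ring
  rw [e2, norm_mul, norm_mul (h ^ 2), norm_pow h, norm_inv]
  calc _ ≤ (A * ‖z0 - w‖ ^ (-(2 - ε))) * (‖h‖ ^ 2 * ‖z0 + h - w‖⁻¹) := by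
        gcongr
        exact hbd w hw1
    _ = A * ‖h‖ ^ (1 + ε / 2) * (‖h‖ ^ (1 - ε / 2) * ‖z0 - w‖ ^ (-(2 - ε)) * ‖z0 + h - w‖⁻¹) := by
        rw [hs]; ring
    _ ≤ A * ‖h‖ ^ (1 + ε / 2) * (2 * (‖z0 - w‖ ^ (-(2 - ε + ε / 2)) +
          ‖z0 + h - w‖ ^ (-(2 - ε + ε / 2)))) := by gcongr
    _ = _ := by ring

lemma cauchyT_hasFDerivAt {R B ε : ℝ} {f : ℂ → ℂ} (hε0 : 0 < ε) (hε1 : ε < 1)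
    (hf : Adm R B f) (hH : IsHolder ε f) (z0 : ℂ) :
    ∃ c : ℂ, HasFDerivAt (cauchyT f)
      (c • (ContinuousLinearMap.id ℝ ℂ) + f z0 • (conjCLE : ℂ →L[ℝ] ℂ)) z0 := by
  obtain ⟨C, hC0, hC⟩ := hH
  set χ : ℂ → ℂ := (Metric.ball z0 1).indicator fun _ => (1 : ℂ) with hχ
  have hχa : Adm (‖z0‖ + 1) 1 χ := disc_adm z0
  set g : ℂ → ℂ := fun w => f w + (-f z0) * χ w with hg
  have hB := hf.nonneg
  have hga : Adm (max R (‖z0‖ + 1)) (B + ‖f z0‖) g := by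
    refine ⟨hf.meas.add (hχa.meas.const_mul _), fun w => ?_, fun w hw => ?_⟩
    · refine (norm_add_le _ _).trans ?_
      rw [norm_mul, norm_neg]
      have h1 := hf.bd w
      have h2 := hχa.bd w
      calc _ ≤ B + ‖f z0‖ * 1 := by gcongr
        _ = _ := by ring
    · have h1 := lt_of_le_of_lt (le_max_left _ _) hw
      have h2 := lt_of_le_of_lt (le_max_right _ _) hw
      simp [hg, hf.supp w h1, hχa.supp w h2]
  have hgz : ∀ w, ‖g w‖ ≤ (C + B) * ‖z0 - w‖ ^ ε := by
    intro w
    have hp : 0 ≤ ‖z0 - w‖ ^ ε := by positivity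
    by_cases h : w ∈ Metric.ball z0 1
    · have : g w = -(f z0 - f w) := by simp [hg, hχ, h]; ring
      rw [this, norm_neg]
      refine (hC z0 w).trans ?_
      gcongr
      linarith
    · have e : g w = f w := by simp [hg, hχ, h]
      have h1 : 1 ≤ ‖z0 - w‖ := by
        rw [norm_sub_rev]; simpa [dist_eq_norm] using h
      have h2 : 1 ≤ ‖z0 - w‖ ^ ε := Real.one_le_rpow h1 hε0.le
      rw [e]
      calc ‖f w‖ ≤ B * 1 := by simpa using hf.bd w
        _ ≤ (C + B) * ‖z0 - w‖ ^ ε := by gcongr; linarith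
  obtain ⟨c, hc⟩ := hasDerivAt_cauchyT_of_vanish hε0 hε1 hga (by positivity) hgz
  refine ⟨c, ?_⟩
  have h1 : HasFDerivAt (cauchyT g) (c • (ContinuousLinearMap.id ℝ ℂ)) z0 := by
    have := hc.hasFDerivAt.restrictScalars ℝ
    refine this.congr_fderiv ?_
    ext x
    simp [mul_comm]
  have h2 : HasFDerivAt (fun z => f z0 * (starRingEnd ℂ) (z - z0))
      (f z0 • (conjCLE : ℂ →L[ℝ] ℂ)) z0 := by
    have h3 : HasFDerivAt (fun z : ℂ => (conjCLE : ℂ →L[ℝ] ℂ) (z - z0)) (conjCLE : ℂ →L[ℝ] ℂ) z0 := by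
      have := (conjCLE : ℂ →L[ℝ] ℂ).hasFDerivAt.comp z0 ((hasFDerivAt_id z0).sub_const z0)
      exact this
    exact h3.const_mul (f z0)
  refine (h1.add h2).congr_of_eventuallyEq ?_
  filter_upwards [Metric.ball_mem_nhds z0 one_pos] with z hz
  have hz' : ‖z - z0‖ < 1 := by simpa [dist_eq_norm] using hz
  have e1 := cauchyT_disc_at z0 hz'
  rw [add_sub_cancel] at e1
  have hga2 : cauchyT g z = cauchyT f z + cauchyT (fun w => (-f z0) * χ w) z := by
    refine cauchyT_add hf (R' := ‖z0‖ + 1) (B' := ‖f z0‖) ⟨hχa.meas.const_mul _, fun w => ?_, fun w hw => ?_⟩ z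
    · rw [norm_mul, norm_neg]
      have h2 := hχa.bd w
      calc _ ≤ ‖f z0‖ * 1 := by gcongr
        _ = _ := by ring
    · simp [hχa.supp w hw]
  rw [cauchyT_const_mul, e1] at hga2
  simp only [Pi.add_apply]
  rw [hga2]
  ring

lemma cauchyT_differentiable {R B ε : ℝ} {f : ℂ → ℂ} (hε0 : 0 < ε) (hε1 : ε < 1)
    (hf : Adm R B f) (hH : IsHolder ε f) : Differentiable ℝ (cauchyT f) := fun z => by
  obtain ⟨c, hc⟩ := cauchyT_hasFDerivAt hε0 hε1 hf hH z
  exact hc.differentiableAt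

lemma wDbar_cauchyT {R B ε : ℝ} {f : ℂ → ℂ} (hε0 : 0 < ε) (hε1 : ε < 1)
    (hf : Adm R B f) (hH : IsHolder ε f) (z : ℂ) : wDbar (cauchyT f) z = f z := by
  obtain ⟨c, hc⟩ := cauchyT_hasFDerivAt hε0 hε1 hf hH z
  rw [wDbar, hc.fderiv]
  simp
  ring_nf
  simp
  ring


/-! ### Wirtinger calculus -/

lemma wDbar_mul {f g : ℂ → ℂ} {z : ℂ} (hf : DifferentiableAt ℝ f z) (hg : DifferentiableAt ℝ g z) :
    wDbar (fun w => f w * g w) z = wDbar f z * g z + f z * wDbar g z := by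
  have := (hf.hasFDerivAt.mul hg.hasFDerivAt).fderiv
  have e : fderiv ℝ (fun w => f w * g w) z = f z • fderiv ℝ g z + g z • fderiv ℝ f z := this
  simp only [wDbar, e]
  simp
  ring

lemma wDbar_sub {f g : ℂ → ℂ} {z : ℂ} (hf : DifferentiableAt ℝ f z) (hg : DifferentiableAt ℝ g z) :
    wDbar (fun w => f w - g w) z = wDbar f z - wDbar g z := by
  have e : fderiv ℝ (fun w => f w - g w) z = fderiv ℝ f z - fderiv ℝ g z :=
    (hf.hasFDerivAt.sub hg.hasFDerivAt).fderiv
  simp only [wDbar, e]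
  simp
  ring

lemma wDbar_add {f g : ℂ → ℂ} {z : ℂ} (hf : DifferentiableAt ℝ f z) (hg : DifferentiableAt ℝ g z) :
    wDbar (fun w => f w + g w) z = wDbar f z + wDbar g z := by
  have e : fderiv ℝ (fun w => f w + g w) z = fderiv ℝ f z + fderiv ℝ g z :=
    (hf.hasFDerivAt.add hg.hasFDerivAt).fderiv
  simp only [wDbar, e]
  simp
  ring

lemma wDbar_const (c z : ℂ) : wDbar (fun _ => c) z = 0 := by
  simp [wDbar]

lemma wDbar_cexp {f : ℂ → ℂ} {z : ℂ} (hf : DifferentiableAt ℝ f z) :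
    wDbar (fun w => Complex.exp (f w)) z = Complex.exp (f z) * wDbar f z := by
  have e : fderiv ℝ (fun w => Complex.exp (f w)) z = Complex.exp (f z) • fderiv ℝ f z :=
    hf.hasFDerivAt.cexp.fderiv
  simp only [wDbar, e]
  simp
  ring

lemma wDbar_neg (f : ℂ → ℂ) (z : ℂ) : wDbar (fun w => - f w) z = - wDbar f z := by
  simp only [wDbar, fderiv_fun_neg]
  simp
  ring

lemma diff_conj {f : ℂ → ℂ} {z : ℂ} (hf : DifferentiableAt ℝ f z) :
    DifferentiableAt ℝ (fun w => (starRingEnd ℂ) (f w)) z :=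
  ((conjCLE : ℂ →L[ℝ] ℂ).hasFDerivAt.comp z hf.hasFDerivAt).differentiableAt

lemma fderiv_conj {f : ℂ → ℂ} {z : ℂ} (hf : DifferentiableAt ℝ f z) (v : ℂ) :
    fderiv ℝ (fun w => (starRingEnd ℂ) (f w)) z v = (starRingEnd ℂ) (fderiv ℝ f z v) := by
  have : fderiv ℝ (fun w => (starRingEnd ℂ) (f w)) z = (conjCLE : ℂ →L[ℝ] ℂ).comp (fderiv ℝ f z) :=
    ((conjCLE : ℂ →L[ℝ] ℂ).hasFDerivAt.comp z hf.hasFDerivAt).fderiv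
  rw [this]
  simp

lemma wDbar_conj {f : ℂ → ℂ} {z : ℂ} (hf : DifferentiableAt ℝ f z) :
    wDbar (fun w => (starRingEnd ℂ) (f w)) z = (starRingEnd ℂ) (wD f z) := by
  have h2 : (starRingEnd ℂ) (2 : ℂ) = 2 := Complex.conj_ofNat 2
  simp only [wDbar, wD, fderiv_conj hf, map_div₀, map_sub, map_add, map_mul, conj_I, h2]
  ring

lemma wD_conj {f : ℂ → ℂ} {z : ℂ} (hf : DifferentiableAt ℝ f z) :
    wD (fun w => (starRingEnd ℂ) (f w)) z = (starRingEnd ℂ) (wDbar f z) := by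
  have h2 : (starRingEnd ℂ) (2 : ℂ) = 2 := Complex.conj_ofNat 2
  simp only [wDbar, wD, fderiv_conj hf, map_div₀, map_sub, map_add, map_mul, conj_I, h2]
  ring

lemma entire_of_wDbar {f : ℂ → ℂ} (hf : Differentiable ℝ f) (h : ∀ z, wDbar f z = 0) :
    Differentiable ℂ f := by
  intro z
  rw [differentiableAt_complex_iff_differentiableAt_real]
  refine ⟨hf z, ?_⟩
  have := h z
  rw [wDbar, div_eq_zero_iff] at this
  have h2 := this.resolve_right (by norm_num)
  rw [smul_eq_mul]
  linear_combination (-I) * h2 + (fderiv ℝ f z) I * I_sq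

/-! ### Bounded Hölder functions -/

lemma IsHolder.conj {ε : ℝ} {f : ℂ → ℂ} (h : IsHolder ε f) :
    IsHolder ε (fun z => (starRingEnd ℂ) (f z)) := by
  obtain ⟨C, hC0, hC⟩ := h
  refine ⟨C, hC0, fun z z' => ?_⟩
  rw [← map_sub, RCLike.norm_conj]
  exact hC z z'

lemma IsHolder.add {ε : ℝ} {f g : ℂ → ℂ} (hf : IsHolder ε f) (hg : IsHolder ε g) :
    IsHolder ε (fun z => f z + g z) := by
  obtain ⟨C, hC0, hC⟩ := hf
  obtain ⟨D, hD0, hD⟩ := hg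
  refine ⟨C + D, by positivity, fun z z' => ?_⟩
  rw [add_sub_add_comm, add_mul]
  exact (norm_add_le _ _).trans (add_le_add (hC z z') (hD z z'))

lemma IsHolder.mul {ε : ℝ} {f g : ℂ → ℂ} {A B : ℝ} (hf : IsHolder ε f) (hg : IsHolder ε g)
    (hfb : ∀ z, ‖f z‖ ≤ A) (hgb : ∀ z, ‖g z‖ ≤ B) :
    IsHolder ε (fun z => f z * g z) := by
  obtain ⟨C, hC0, hC⟩ := hf
  obtain ⟨D, hD0, hD⟩ := hg
  have hA : 0 ≤ A := (norm_nonneg _).trans (hfb 0)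
  have hB : 0 ≤ B := (norm_nonneg _).trans (hgb 0)
  refine ⟨C * B + A * D, by positivity, fun z z' => ?_⟩
  have e : f z * g z - f z' * g z' = (f z - f z') * g z + f z' * (g z - g z') := by ring
  rw [e]
  calc _ ≤ ‖(f z - f z')‖ * ‖g z‖ + ‖f z'‖ * ‖g z - g z'‖ := by
        refine (norm_add_le _ _).trans ?_
        rw [norm_mul, norm_mul]
    _ ≤ (C * ‖z - z'‖ ^ ε) * B + A * (D * ‖z - z'‖ ^ ε) := by
        gcongr
        exacts [hC z z', hgb z, hfb z', hD z z']
    _ = _ := by ring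

lemma IsHolder.const (ε : ℝ) (c : ℂ) : IsHolder ε (fun _ => c) :=
  ⟨0, le_rfl, fun z z' => by simp⟩

lemma IsHolder.const_mul {ε : ℝ} {f : ℂ → ℂ} (hf : IsHolder ε f) (c : ℂ) :
    IsHolder ε (fun z => c * f z) := by
  obtain ⟨C, hC0, hC⟩ := hf
  refine ⟨‖c‖ * C, by positivity, fun z z' => ?_⟩
  rw [← mul_sub, norm_mul, mul_assoc]
  gcongr
  exact hC z z'

lemma IsHolder.continuous {ε : ℝ} {f : ℂ → ℂ} (hε : 0 < ε) (hf : IsHolder ε f) : Continuous f := by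
  obtain ⟨C, hC0, hC⟩ := hf
  refine continuous_iff_continuousAt.2 fun z => ?_
  rw [ContinuousAt, tendsto_iff_norm_sub_tendsto_zero]
  have hc : Continuous fun w : ℂ => C * ‖w - z‖ ^ ε := by
    have : Continuous fun w : ℂ => ‖w - z‖ ^ ε :=
      (continuous_id.sub continuous_const).norm.rpow_const fun _ => Or.inr hε.le
    fun_prop
  have ht := hc.tendsto z
  simp only [sub_self, norm_zero, Real.zero_rpow hε.ne', mul_zero] at ht
  exact squeeze_zero (fun _ => norm_nonneg _) (fun w => hC w z) ht

/-- Composition with a map that is Lipschitz on the range. -/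
lemma IsHolder.comp_lip {ε L : ℝ} {f φ : ℂ → ℂ} (hf : IsHolder ε f) (hL : 0 ≤ L)
    (h : ∀ z z', ‖φ (f z) - φ (f z')‖ ≤ L * ‖f z - f z'‖) : IsHolder ε (fun z => φ (f z)) := by
  obtain ⟨C, hC0, hC⟩ := hf
  refine ⟨L * C, by positivity, fun z z' => (h z z').trans ?_⟩
  rw [mul_assoc]
  gcongr
  exact hC z z'

lemma IsHolder.cexp {ε A : ℝ} {f : ℂ → ℂ} (hf : IsHolder ε f) (hb : ∀ z, ‖f z‖ ≤ A) :
    IsHolder ε (fun z => Complex.exp (f z)) := by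
  refine hf.comp_lip (L := Real.exp A) (by positivity) fun z z' => ?_
  refine (convex_closedBall (0 : ℂ) A).norm_image_sub_le_of_norm_deriv_le (𝕜 := ℂ)
    (fun w _ => Complex.differentiableAt_exp) (fun w hw => ?_) (by simpa using hb z')
    (by simpa using hb z)
  rw [Complex.deriv_exp, Complex.norm_exp]
  gcongr
  exact (Complex.re_le_norm w).trans (by simpa using hw)

lemma isHolder_of_lip {ε L A : ℝ} {f : ℂ → ℂ} (h0 : 0 < ε) (h1 : ε < 1) (hL : 0 ≤ L)
    (h : ∀ z z', ‖f z - f z'‖ ≤ L * ‖z - z'‖) (hb : ∀ z, ‖f z‖ ≤ A) : IsHolder ε f := by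
  have hA : 0 ≤ A := (norm_nonneg _).trans (hb 0)
  refine ⟨L + 2 * A, by positivity, fun z z' => ?_⟩
  rcases le_total ‖z - z'‖ 1 with hle | hle
  · have : ‖z - z'‖ ≤ ‖z - z'‖ ^ ε := Real.self_le_rpow_of_le_one (norm_nonneg _) hle h1.le
    calc _ ≤ L * ‖z - z'‖ := h z z'
      _ ≤ (L + 2 * A) * ‖z - z'‖ ^ ε := by gcongr; linarith
  · have : 1 ≤ ‖z - z'‖ ^ ε := Real.one_le_rpow hle h0.le
    calc _ ≤ ‖f z‖ + ‖f z'‖ := norm_sub_le _ _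
      _ ≤ (2 * A) * 1 := by linarith [hb z, hb z']
      _ ≤ (L + 2 * A) * ‖z - z'‖ ^ ε := by gcongr; linarith

/-! ### Liouville and uniqueness -/

lemma cauchyT_tendsto {R B : ℝ} {f : ℂ → ℂ} (hf : Adm R B f) :
    Filter.Tendsto (cauchyT f) (Filter.cocompact ℂ) (nhds 0) := by
  have hf' : Adm (max R 0) B f :=
    ⟨hf.meas, hf.bd, fun w hw => hf.supp w (lt_of_le_of_lt (le_max_left _ _) hw)⟩
  obtain ⟨M, hM0, hM⟩ := cauchyT_decay (max R 0) (le_max_right _ _)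
  have h1 : Filter.Tendsto (fun z : ℂ => M * B / (1 + ‖z‖)) (Filter.cocompact ℂ) (nhds 0) :=
    Filter.Tendsto.const_div_atTop
      (Filter.tendsto_atTop_add_const_left _ _ (tendsto_norm_cocompact_atTop)) _
  refine squeeze_zero_norm (fun z => ?_) h1
  rw [le_div_iff₀ (by positivity), mul_comm]
  exact hM f B hf' z

lemma eq_cauchyT {R B ε : ℝ} {F h : ℂ → ℂ} (hε0 : 0 < ε) (hε1 : ε < 1)
    (hF : Adm R B F) (hH : IsHolder ε F) (hd : Differentiable ℝ h)
    (hw : ∀ z, wDbar h z = F z) (ht : Filter.Tendsto h (Filter.cocompact ℂ) (nhds 0)) (z : ℂ) :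
    h z = cauchyT F z := by
  have hcd := cauchyT_differentiable hε0 hε1 hF hH
  have he : Differentiable ℂ (fun z => h z - cauchyT F z) := by
    refine entire_of_wDbar (hd.sub hcd) fun z => ?_
    rw [wDbar_sub (hd z) (hcd z), hw, wDbar_cauchyT hε0 hε1 hF hH, sub_self]
  have := he.apply_eq_of_tendsto_cocompact z (c := 0) (by simpa using ht.sub (cauchyT_tendsto hF))
  exact sub_eq_zero.1 this

lemma bounded_of_tendsto {d : ℂ → ℂ} (hc : Continuous d)
    (ht : Filter.Tendsto d (Filter.cocompact ℂ) (nhds 0)) : ∃ D, ∀ z, ‖d z‖ ≤ D := by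
  let g : ZeroAtInftyContinuousMap ℂ ℂ := ⟨⟨d, hc⟩, ht⟩
  obtain ⟨D, hD⟩ := (ZeroAtInftyContinuousMap.isBounded_range g).exists_norm_le
  exact ⟨D, fun z => hD _ ⟨z, rfl⟩⟩

lemma pseudoanalytic_liouville {R B ε : ℝ} {Q d : ℂ → ℂ} (hε0 : 0 < ε) (hε1 : ε < 1)
    (hQ : Adm R B Q) (hQH : IsHolder ε Q) (hd : Differentiable ℝ d) (hdH : IsHolder ε d)
    (hw : ∀ z, wDbar d z = Q z * (starRingEnd ℂ) (d z))
    (ht : Filter.Tendsto d (Filter.cocompact ℂ) (nhds 0)) (z : ℂ) : d z = 0 := by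
  obtain ⟨M, hM0, hM⟩ := cauchyT_bound R
  obtain ⟨M', hM'0, hM'⟩ := cauchyT_holder R ε hε0 hε1
  obtain ⟨D, hD⟩ := bounded_of_tendsto hd.continuous ht
  have hD0 : 0 ≤ D := (norm_nonneg _).trans (hD 0)
  have hB := hQ.nonneg
  have main : ∀ t : ℝ, 0 < t →
      ‖d z‖ ≤ Real.exp (M * B) * (M * (B * Real.exp (M * B))) * t := by
    intro t htp
    -- the regularised quotient
    set N : ℂ → ℝ := fun z => (‖d z‖ ^ 2 + t ^ 2)⁻¹ with hN
    have hNpos : ∀ z, 0 < N z := fun z => by positivity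
    have hNb : ∀ z, N z ≤ (t ^ 2)⁻¹ := fun z => by
      apply inv_anti₀ (by positivity)
      have : 0 ≤ ‖d z‖ ^ 2 := by positivity
      linarith
    have hcb : ∀ z, ‖(starRingEnd ℂ) (d z)‖ ≤ D := fun z => by rw [RCLike.norm_conj]; exact hD z
    have hNnorm : ∀ z, ‖(N z : ℂ)‖ = N z := fun z => by
      rw [Complex.norm_real, Real.norm_of_nonneg (hNpos z).le]
    have hNH : IsHolder ε (fun z => (N z : ℂ)) := by
      have h1 : IsHolder ε (fun z => d z * (starRingEnd ℂ) (d z)) := hdH.mul hdH.conj hD hcb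
      have h2 := h1.comp_lip (φ := fun w => ((w.re + t ^ 2)⁻¹ : ℝ)) (L := (t ^ 2)⁻¹ * (t ^ 2)⁻¹)
        (by positivity) ?_
      · refine cast ?_ h2
        congr 1
        ext z
        simp only [hN, Complex.mul_conj, Complex.ofReal_re, Complex.normSq_eq_norm_sq]
      · intro z z'
        simp only [Complex.mul_conj, Complex.ofReal_re, Complex.normSq_eq_norm_sq]
        rw [← Complex.ofReal_sub, ← Complex.ofReal_sub, Complex.norm_real, Complex.norm_real]
        have ea : (‖d z‖ ^ 2 + t ^ 2)⁻¹ - (‖d z'‖ ^ 2 + t ^ 2)⁻¹ =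
            (N z * N z') * (‖d z'‖ ^ 2 - ‖d z‖ ^ 2) := by
          simp only [hN]
          have h3 : ‖d z‖ ^ 2 + t ^ 2 ≠ 0 := by positivity
          have h4 : ‖d z'‖ ^ 2 + t ^ 2 ≠ 0 := by positivity
          field_simp
          ring
        rw [ea, norm_mul, Real.norm_of_nonneg (mul_nonneg (hNpos z).le (hNpos z').le),
          norm_sub_rev]
        have := hNb z
        have := hNb z'
        have := (hNpos z).le
        have := (hNpos z').le
        gcongr
    have hNle : ∀ z, ‖(N z : ℂ)‖ ≤ (t ^ 2)⁻¹ := fun z => by rw [hNnorm]; exact hNb z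
    -- auxiliary exponent
    have hcc : IsHolder ε (fun z => (starRingEnd ℂ) (d z) * (starRingEnd ℂ) (d z)) :=
      hdH.conj.mul hdH.conj hcb hcb
    have hccb : ∀ z, ‖(starRingEnd ℂ) (d z) * (starRingEnd ℂ) (d z)‖ ≤ D * D := fun z => by
      rw [norm_mul]; gcongr <;> exact hcb z
    set φ : ℂ → ℂ := fun z => (starRingEnd ℂ) (d z) * (starRingEnd ℂ) (d z) * (N z : ℂ) with hφ
    have hφH : IsHolder ε φ := hcc.mul hNH hccb hNle
    have hφ1 : ∀ z, ‖φ z‖ ≤ 1 := fun z => by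
      simp only [hφ]
      rw [norm_mul, norm_mul, hNnorm, RCLike.norm_conj]
      simp only [hN]
      rw [mul_inv_le_iff₀ (by positivity)]
      nlinarith [sq_nonneg t]
    set g : ℂ → ℂ := fun z => Q z * φ z with hg
    have hgH : IsHolder ε g := hQH.mul hφH hQ.bd hφ1
    have hgA : Adm R B g := by
      refine ⟨(hgH.continuous hε0).aestronglyMeasurable, fun w => ?_, fun w hw => ?_⟩
      · simp only [hg]
        rw [norm_mul]
        calc _ ≤ B * 1 := by gcongr; exacts [hQ.bd w, hφ1 w]
          _ = B := mul_one B
      · simp [hg, hQ.supp w hw]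
    set s : ℂ → ℂ := fun z => - cauchyT g z with hs
    have hsd : Differentiable ℝ s := (cauchyT_differentiable hε0 hε1 hgA hgH).neg
    have hsb : ∀ z, ‖s z‖ ≤ M * B := fun z => by
      simp only [hs, norm_neg]; exact hM g B hgA z
    have hsw : ∀ z, wDbar s z = - g z := fun z => by
      simp only [hs]; rw [wDbar_neg, wDbar_cauchyT hε0 hε1 hgA hgH]
    have hsH : IsHolder ε s := by
      refine ⟨M' * B, by positivity, fun z z' => ?_⟩
      simp only [hs]
      rw [← neg_sub', norm_neg]
      exact hM' g B hgA z z'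
    set E : ℂ → ℂ := fun z => Complex.exp (s z) with hE
    have hEd : Differentiable ℝ E := fun z => (hsd z).cexp
    have hEw : ∀ z, wDbar E z = E z * (- g z) := fun z => by
      rw [← hsw z]; exact wDbar_cexp (hsd z)
    have hEH : IsHolder ε E := hsH.cexp hsb
    have hEb : ∀ z, ‖E z‖ ≤ Real.exp (M * B) := fun z => by
      simp only [hE]
      rw [Complex.norm_exp]
      gcongr
      exact (Complex.re_le_norm _).trans (hsb z)
    have hEb' : ∀ z, Real.exp (-(M * B)) ≤ ‖E z‖ := fun z => by
      simp only [hE]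
      rw [Complex.norm_exp]
      gcongr
      have := (abs_le.1 (Complex.abs_re_le_norm (s z))).1
      linarith [hsb z]
    set ψ : ℂ → ℂ := fun z => (starRingEnd ℂ) (d z) * (((t ^ 2 : ℝ) : ℂ) * (N z : ℂ)) with hψ
    have hNt : ∀ z, ‖((t ^ 2 : ℝ) : ℂ) * (N z : ℂ)‖ ≤ 1 := fun z => by
      rw [norm_mul, hNnorm, Complex.norm_real, Real.norm_of_nonneg (by positivity)]
      simp only [hN]
      rw [mul_inv_le_iff₀ (by positivity)]
      nlinarith [sq_nonneg ‖d z‖]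
    have hψH : IsHolder ε ψ := hdH.conj.mul (hNH.const_mul _) hcb hNt
    have hψb : ∀ z, ‖ψ z‖ ≤ t := fun z => by
      simp only [hψ]
      rw [norm_mul, norm_mul, hNnorm, Complex.norm_real, Real.norm_of_nonneg (by positivity),
        RCLike.norm_conj]
      simp only [hN]
      rw [← mul_assoc, mul_inv_le_iff₀ (by positivity)]
      have h1 : ‖d z‖ * t ≤ ‖d z‖ ^ 2 + t ^ 2 := by
        nlinarith [sq_nonneg (‖d z‖ - t), sq_nonneg ‖d z‖, sq_nonneg t]
      nlinarith [mul_le_mul_of_nonneg_left h1 htp.le]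
    have hEψ : IsHolder ε (fun z => E z * ψ z) := hEH.mul hψH hEb hψb
    have hEψb : ∀ z, ‖E z * ψ z‖ ≤ Real.exp (M * B) * t := fun z => by
      rw [norm_mul]; gcongr; exacts [hEb z, hψb z]
    have hFH : IsHolder ε (fun z => Q z * (E z * ψ z)) := hQH.mul hEψ hQ.bd hEψb
    have hFA : Adm R (B * (Real.exp (M * B) * t)) (fun z => Q z * (E z * ψ z)) := by
      refine ⟨(hFH.continuous hε0).aestronglyMeasurable, fun w => ?_, fun w hw => ?_⟩
      · rw [norm_mul]
        gcongr
        exacts [hQ.bd w, hEψb w]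
      · simp [hQ.supp w hw]
    have hrep := eq_cauchyT hε0 hε1 hFA hFH (h := fun z => d z * E z) (hd.mul hEd) ?_ ?_ z
    · have h1 : ‖d z * E z‖ ≤ M * (B * (Real.exp (M * B) * t)) := by
        rw [hrep]; exact hM _ _ hFA z
      rw [norm_mul] at h1
      have h2 : ‖d z‖ * Real.exp (-(M * B)) ≤ M * (B * (Real.exp (M * B) * t)) := by
        refine le_trans ?_ h1
        gcongr
        exact hEb' z
      rw [Real.exp_neg, mul_inv_le_iff₀ (by positivity)] at h2
      calc _ ≤ _ := h2
        _ = _ := by ring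
    · intro z
      rw [wDbar_mul (hd z) (hEd z), hw, hEw]
      simp only [hg, hφ, hψ]
      have hn : (N z : ℂ) * (d z * (starRingEnd ℂ) (d z) + ((t ^ 2 : ℝ) : ℂ)) = 1 := by
        rw [Complex.mul_conj, Complex.normSq_eq_norm_sq, ← Complex.ofReal_add, ← Complex.ofReal_mul]
        simp only [hN]
        rw [inv_mul_cancel₀ (by positivity)]
        simp
      linear_combination (-(Q z * (starRingEnd ℂ) (d z) * E z)) * hn
    · refine squeeze_zero_norm (a := fun z => ‖d z‖ * Real.exp (M * B)) (fun z => ?_) ?_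
      · rw [norm_mul]; gcongr; exact hEb z
      · simpa using ht.norm.mul_const (Real.exp (M * B))
  set K := Real.exp (M * B) * (M * (B * Real.exp (M * B))) with hK
  have hlim : Filter.Tendsto (fun t : ℝ => K * t) (nhdsWithin 0 (Set.Ioi 0)) (nhds 0) := by
    have : Continuous fun t : ℝ => K * t := by fun_prop
    simpa using (this.tendsto 0).mono_left nhdsWithin_le_nhds
  have hle : ‖d z‖ ≤ 0 := ge_of_tendsto hlim
    (by filter_upwards [self_mem_nhdsWithin] with t ht using main t ht)
  exact norm_le_zero_iff.1 hle


/-! ### Existence for the scalar pseudoanalytic equation -/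

/-- The source term `Q · conj u` for `u` defined on the closed ball. -/
noncomputable def srcT (R : ℝ) (Q : ℂ → ℂ)
    (u : BoundedContinuousFunction (Metric.closedBall (0 : ℂ) R) ℂ) : ℂ → ℂ :=
  fun w => Q w * (starRingEnd ℂ) (Function.extend Subtype.val u (fun _ => 0) w)

lemma srcT_in {R : ℝ} {Q : ℂ → ℂ}
    (u : BoundedContinuousFunction (Metric.closedBall (0 : ℂ) R) ℂ)
    (w : Metric.closedBall (0 : ℂ) R) : srcT R Q u w = Q w * (starRingEnd ℂ) (u w) := by
  rw [srcT, Subtype.val_injective.extend_apply]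

lemma srcT_out {R B : ℝ} {Q : ℂ → ℂ} (hQ : Adm R B Q)
    (u : BoundedContinuousFunction (Metric.closedBall (0 : ℂ) R) ℂ)
    {w : ℂ} (hw : w ∉ Metric.closedBall (0 : ℂ) R) : srcT R Q u w = 0 := by
  rw [srcT, hQ.supp w (by simpa using hw), zero_mul]

lemma srcT_adm {R B : ℝ} {Q : ℂ → ℂ} (hQ : Adm R B Q)
    (u : BoundedContinuousFunction (Metric.closedBall (0 : ℂ) R) ℂ) :
    Adm R (B * ‖u‖) (srcT R Q u) := by
  have hB := hQ.nonneg
  refine ⟨?_, fun w => ?_, fun w hw => srcT_out hQ u (by simpa using hw)⟩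
  · refine hQ.meas.mul ?_
    have h1 : Measurable (Function.extend Subtype.val u (fun _ : ℂ => (0 : ℂ))) :=
      (MeasurableEmbedding.subtype_coe Metric.isClosed_closedBall.measurableSet).measurable_extend
        u.continuous.measurable measurable_const
    exact (continuous_conj.measurable.comp h1).aestronglyMeasurable
  · by_cases hw : w ∈ Metric.closedBall (0 : ℂ) R
    · rw [srcT_in u ⟨w, hw⟩, norm_mul, RCLike.norm_conj]
      gcongr
      exacts [hQ.bd w, u.norm_coe_le_norm _]
    · rw [srcT_out hQ u hw, norm_zero]
      positivity

lemma srcT_add {R B : ℝ} {Q : ℂ → ℂ} (hQ : Adm R B Q)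
    (u v : BoundedContinuousFunction (Metric.closedBall (0 : ℂ) R) ℂ) :
    srcT R Q (u + v) = fun w => srcT R Q u w + srcT R Q v w := by
  ext w
  by_cases hw : w ∈ Metric.closedBall (0 : ℂ) R
  · rw [srcT_in _ ⟨w, hw⟩, srcT_in _ ⟨w, hw⟩, srcT_in _ ⟨w, hw⟩]
    simp [mul_add]
  · rw [srcT_out hQ _ hw, srcT_out hQ _ hw, srcT_out hQ _ hw, add_zero]

lemma srcT_smul {R B : ℝ} {Q : ℂ → ℂ} (hQ : Adm R B Q) (c : ℝ)
    (u : BoundedContinuousFunction (Metric.closedBall (0 : ℂ) R) ℂ) :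
    srcT R Q (c • u) = fun w => (c : ℂ) * srcT R Q u w := by
  ext w
  by_cases hw : w ∈ Metric.closedBall (0 : ℂ) R
  · rw [srcT_in _ ⟨w, hw⟩, srcT_in _ ⟨w, hw⟩]
    simp
    ring
  · rw [srcT_out hQ _ hw, srcT_out hQ _ hw, mul_zero]

lemma cauchyT_isHolder {R B ε : ℝ} {f : ℂ → ℂ} (hε0 : 0 < ε) (hε1 : ε < 1) (hf : Adm R B f) :
    IsHolder ε (cauchyT f) := by
  obtain ⟨M, hM0, hM⟩ := cauchyT_holder R ε hε0 hε1
  have := hf.nonneg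
  exact ⟨M * B, by positivity, fun z z' => hM f B hf z z'⟩

instance closedBall_compactSpace (R : ℝ) : CompactSpace (Metric.closedBall (0 : ℂ) R) :=
  isCompact_iff_compactSpace.1 (isCompact_closedBall 0 R)

/-- A solution on the ball of the integral equation `u = c + C(Q ū)` gives a global solution. -/
lemma global_of_local {R B ε : ℝ} {Q : ℂ → ℂ} (hε0 : 0 < ε) (hε1 : ε < 1)
    (hQ : Adm R B Q) (hQH : IsHolder ε Q) (c : ℂ)
    (u : BoundedContinuousFunction (Metric.closedBall (0 : ℂ) R) ℂ)
    (hu : ∀ z, u z = c + cauchyT (srcT R Q u) z) :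
    Differentiable ℝ (fun z => c + cauchyT (srcT R Q u) z) ∧
    ∀ z, wDbar (fun z => c + cauchyT (srcT R Q u) z) z
      = Q z * (starRingEnd ℂ) (c + cauchyT (srcT R Q u) z) := by
  have hA := srcT_adm hQ u
  set U : ℂ → ℂ := fun z => c + cauchyT (srcT R Q u) z with hU
  have hUH : IsHolder ε U := (IsHolder.const ε c).add (cauchyT_isHolder hε0 hε1 hA)
  obtain ⟨M, hM0, hM⟩ := cauchyT_bound R
  have hUb : ∀ z, ‖(starRingEnd ℂ) (U z)‖ ≤ ‖c‖ + M * (B * ‖u‖) := fun z => by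
    rw [RCLike.norm_conj]
    exact (norm_add_le _ _).trans (by gcongr; exact hM _ _ hA z)
  have hs : srcT R Q u = fun w => Q w * (starRingEnd ℂ) (U w) := by
    ext w
    by_cases hw : w ∈ Metric.closedBall (0 : ℂ) R
    · rw [srcT_in u ⟨w, hw⟩, hu]
    · rw [srcT_out hQ u hw, hQ.supp w (by simpa using hw), zero_mul]
  have hsH : IsHolder ε (srcT R Q u) := by
    rw [hs]; exact hQH.mul hUH.conj hQ.bd hUb
  have hd := cauchyT_differentiable hε0 hε1 hA hsH
  refine ⟨hd.const_add c, fun z => ?_⟩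
  rw [hU, wDbar_add (differentiableAt_const c) (hd z), wDbar_const, zero_add,
    wDbar_cauchyT hε0 hε1 hA hsH]
  exact congrFun hs z

/-- The integral operator. -/
noncomputable def opL {R B : ℝ} {Q : ℂ → ℂ} (hQ : Adm R B Q) :
    BoundedContinuousFunction (Metric.closedBall (0 : ℂ) R) ℂ →ₗ[ℝ]
      BoundedContinuousFunction (Metric.closedBall (0 : ℂ) R) ℂ where
  toFun u := BoundedContinuousFunction.mkOfCompact ⟨fun z => cauchyT (srcT R Q u) z,
    ((cauchyT_isHolder (ε := 1 / 2) (by norm_num) (by norm_num) (srcT_adm hQ u)).continuous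
      (by norm_num)).comp continuous_subtype_val⟩
  map_add' u v := by
    ext z
    simp [srcT_add hQ, cauchyT_add (srcT_adm hQ u) (srcT_adm hQ v)]
  map_smul' c u := by
    ext z
    simp [srcT_smul hQ, cauchyT_const_mul]

lemma opL_apply {R B : ℝ} {Q : ℂ → ℂ} (hQ : Adm R B Q)
    (u : BoundedContinuousFunction (Metric.closedBall (0 : ℂ) R) ℂ)
    (z : Metric.closedBall (0 : ℂ) R) : opL hQ u z = cauchyT (srcT R Q u) z := rfl

lemma exists_opC {R B : ℝ} {Q : ℂ → ℂ} (hQ : Adm R B Q) :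
    ∃ T : BoundedContinuousFunction (Metric.closedBall (0 : ℂ) R) ℂ →L[ℝ]
      BoundedContinuousFunction (Metric.closedBall (0 : ℂ) R) ℂ,
      (∀ u z, T u z = cauchyT (srcT R Q u) z) ∧ IsCompactOperator T := by
  obtain ⟨M, hM0, hM⟩ := cauchyT_bound R
  obtain ⟨M', hM'0, hM'⟩ := cauchyT_holder R (1 / 2) (by norm_num) (by norm_num)
  have hB := hQ.nonneg
  refine ⟨(opL hQ).mkContinuous (M * B) fun u => ?_, fun u z => rfl, ?_⟩
  · refine (BoundedContinuousFunction.norm_le (by positivity)).2 fun z => ?_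
    rw [opL_apply, mul_assoc]
    exact hM _ _ (srcT_adm hQ u) z
  · set A := (opL hQ) '' (Metric.closedBall 0 1) with hA
    refine ⟨closure A, ?_, ?_⟩
    · refine BoundedContinuousFunction.arzela_ascoli (Metric.closedBall 0 (M * B))
        (isCompact_closedBall _ _) A ?_ ?_
      · rintro _ z ⟨u, hu, rfl⟩
        rw [opL_apply, mem_closedBall_zero_iff]
        rw [mem_closedBall_zero_iff] at hu
        calc _ ≤ M * (B * ‖u‖) := hM _ _ (srcT_adm hQ u) z
          _ ≤ M * (B * 1) := by gcongr
          _ = M * B := by ring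
      · refine Metric.equicontinuous_of_continuity_modulus
          (fun t => M' * B * t ^ (1 / 2 : ℝ)) ?_ _ ?_
        · have : Continuous fun t : ℝ => M' * B * t ^ (1 / 2 : ℝ) :=
            continuous_const.mul (continuous_id.rpow_const fun _ => Or.inr (by norm_num))
          have h := this.tendsto 0
          rw [Real.zero_rpow (by norm_num), mul_zero] at h
          exact h
        · rintro x y ⟨_, u, hu, rfl⟩
          rw [mem_closedBall_zero_iff] at hu
          change dist (opL hQ u x) (opL hQ u y) ≤ _
          rw [opL_apply, opL_apply, dist_eq_norm, Subtype.dist_eq, dist_eq_norm]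
          calc _ ≤ M' * (B * ‖u‖) * ‖(x : ℂ) - y‖ ^ (1 / 2 : ℝ) := hM' _ _ (srcT_adm hQ u) x y
            _ ≤ M' * (B * 1) * ‖(x : ℂ) - y‖ ^ (1 / 2 : ℝ) := by gcongr
            _ = _ := by ring
    · refine Filter.mem_of_superset (Metric.closedBall_mem_nhds 0 one_pos) fun u hu => ?_
      exact subset_closure ⟨u, hu, rfl⟩

lemma scalar_exists {R B ε : ℝ} {Q : ℂ → ℂ} (hε0 : 0 < ε) (hε1 : ε < 1)
    (hQ : Adm R B Q) (hQH : IsHolder ε Q) :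
    ∃ f : ℂ → ℂ, ∃ B' : ℝ, Adm R B' f ∧ Differentiable ℝ (fun z => 1 + cauchyT f z) ∧
      ∀ z, wDbar (fun z => 1 + cauchyT f z) z = Q z * (starRingEnd ℂ) (1 + cauchyT f z) := by
  obtain ⟨T, hT, hTc⟩ := exists_opC hQ
  rcases hTc.hasEigenvalue_or_mem_resolventSet (one_ne_zero (α := ℝ)) with h | h
  · exfalso
    obtain ⟨u, hu⟩ := h.exists_hasEigenvector
    have hu1 : T u = u := by simpa using Module.End.mem_eigenspace_iff.1 hu.1
    have hloc : ∀ z, u z = 0 + cauchyT (srcT R Q u) z := fun z => by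
      rw [zero_add, ← hT, hu1]
    obtain ⟨hd, hw⟩ := global_of_local hε0 hε1 hQ hQH 0 u hloc
    simp only [zero_add] at hd hw hloc
    refine hu.2 ?_
    ext z
    rw [hloc]
    exact pseudoanalytic_liouville hε0 hε1 hQ hQH hd
      (cauchyT_isHolder hε0 hε1 (srcT_adm hQ u)) hw (cauchyT_tendsto (srcT_adm hQ u)) z
  · rw [spectrum.mem_resolventSet_iff, map_one] at h
    obtain ⟨S, hS⟩ := h.exists_right_inv
    have hS1 := DFunLike.congr_fun hS (BoundedContinuousFunction.const _ (1 : ℂ))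
    set u := S (BoundedContinuousFunction.const _ (1 : ℂ)) with hu
    have hS2 : u - T u = BoundedContinuousFunction.const _ (1 : ℂ) := hS1
    have hloc : ∀ z, u z = 1 + cauchyT (srcT R Q u) z := fun z => by
      have := DFunLike.congr_fun hS2 z
      simp only [BoundedContinuousFunction.sub_apply, BoundedContinuousFunction.const_apply, hT]
        at this
      linear_combination this
    obtain ⟨hd, hw⟩ := global_of_local hε0 hε1 hQ hQH 1 u hloc
    exact ⟨_, _, srcT_adm hQ u, hd, hw⟩

/-! ### Integrability at infinity -/

lemma cauchyT_memLp {R B r : ℝ} {f : ℂ → ℂ} (hr : 2 < r) (hf : Adm R B f) :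
    MemLp (cauchyT f) (ENNReal.ofReal r) := by
  have hf' : Adm (max R 0) B f :=
    ⟨hf.meas, hf.bd, fun w hw => hf.supp w (lt_of_le_of_lt (le_max_left _ _) hw)⟩
  obtain ⟨M, hM0, hM⟩ := cauchyT_decay (max R 0) (le_max_right _ _)
  have hm : AEStronglyMeasurable (cauchyT f) volume :=
    ((cauchyT_isHolder (ε := 1 / 2) (by norm_num) (by norm_num) hf).continuous
      (by norm_num)).aestronglyMeasurable
  have hi : Integrable (fun z : ℂ => (1 + ‖z‖) ^ (-r)) :=
    integrable_one_add_norm (by rw [Complex.finrank_real_complex]; exact_mod_cast hr)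
  have hB := hf.nonneg
  rw [← integrable_norm_rpow_iff hm (by simp; linarith) ENNReal.ofReal_ne_top,
    ENNReal.toReal_ofReal (by linarith)]
  refine (hi.const_mul ((M * B) ^ r)).mono'
    (hm.norm.aemeasurable.pow_const r).aestronglyMeasurable (ae_of_all _ fun z => ?_)
  have h1 : ‖cauchyT f z‖ ≤ (M * B) * (1 + ‖z‖)⁻¹ := by
    rw [← div_eq_mul_inv, le_div_iff₀ (by positivity), mul_comm]
    exact hM f B hf' z
  rw [Real.norm_of_nonneg (by positivity), Real.rpow_neg (by positivity),
    ← Real.inv_rpow (by positivity), ← Real.mul_rpow (by positivity) (by positivity)]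
  exact Real.rpow_le_rpow (norm_nonneg _) h1 (by linarith)

lemma tendsto_of_memLp {ε r : ℝ} {f : ℂ → ℂ} (hε0 : 0 < ε) (hr : 2 < r)
    (hf : MemLp f (ENNReal.ofReal r)) (hH : IsHolder ε f) :
    Filter.Tendsto f (Filter.cocompact ℂ) (nhds 0) := by
  obtain ⟨C, hC0, hC⟩ := hH
  rw [tendsto_zero_iff_norm_tendsto_zero, Metric.tendsto_nhds]
  intro η hη
  -- uniform radius on which `f` varies by at most `η / 2`
  obtain ⟨δ, hδ0, hδ1, hδ⟩ : ∃ δ : ℝ, 0 < δ ∧ δ ≤ 1 ∧ C * δ ^ ε ≤ η / 2 := by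
    have hc : Continuous fun t : ℝ => C * t ^ ε :=
      continuous_const.mul (continuous_id.rpow_const fun _ => Or.inr hε0.le)
    have h := hc.tendsto 0
    rw [Real.zero_rpow hε0.ne', mul_zero] at h
    have h2 := (h.mono_left (nhdsWithin_le_nhds (s := Set.Ioi 0))).eventually
      (ge_mem_nhds (show (0 : ℝ) < η / 2 by positivity))
    have h3 : ∀ᶠ t : ℝ in nhdsWithin 0 (Set.Ioi 0), t ≤ 1 :=
      nhdsWithin_le_nhds (ge_mem_nhds one_pos)
    obtain ⟨t, ⟨ht1, ht2⟩, ht3⟩ := ((h2.and h3).and self_mem_nhdsWithin).exists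
    exact ⟨t, ht3, ht2, ht1⟩
  set S : Set ℂ := {z | η / 2 ≤ ‖f z‖} with hS
  have hfc : Continuous f := IsHolder.continuous hε0 ⟨C, hC0, hC⟩
  have hSm : MeasurableSet S := (isClosed_le continuous_const hfc.norm).measurableSet
  have hSf : volume S < ⊤ := by
    have := hf.meas_ge_lt_top (ε := (η / 2).toNNReal) (by simp; linarith) ENNReal.ofReal_ne_top
      (by simp; linarith)
    refine lt_of_le_of_lt (measure_mono fun z hz => ?_) this
    change (η / 2).toNNReal ≤ ‖f z‖₊
    rw [Real.toNNReal_le_iff_le_coe]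
    exact hz
  have htail : Filter.Tendsto (fun n : ℕ => volume (S ∩ {z | (n : ℝ) ≤ ‖z‖})) Filter.atTop
      (nhds 0) := by
    have hE : (⋂ n : ℕ, S ∩ {z : ℂ | (n : ℝ) ≤ ‖z‖}) = ∅ := by
      ext z
      simp only [Set.mem_iInter, Set.mem_inter_iff, Set.mem_ofPred_eq, Set.mem_empty_iff_false,
        iff_false, not_forall]
      obtain ⟨n, hn⟩ := exists_nat_gt ‖z‖
      exact ⟨n, fun h => absurd h.2 (not_le.2 hn)⟩
    have := tendsto_measure_iInter_atTop (μ := (volume : Measure ℂ))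
      (s := fun n : ℕ => S ∩ {z : ℂ | (n : ℝ) ≤ ‖z‖})
      (fun n => (hSm.inter (isClosed_le continuous_const continuous_norm).measurableSet).nullMeasurableSet)
      (fun a b hab z hz => ⟨hz.1, (Nat.cast_le (α := ℝ).2 hab).trans hz.2⟩)
      ⟨0, (lt_of_le_of_lt (measure_mono Set.inter_subset_left) hSf).ne⟩
    rwa [hE, measure_empty] at this
  have hball : (0 : ENNReal) < volume (Metric.ball (0 : ℂ) δ) := Metric.measure_ball_pos _ _ hδ0
  obtain ⟨n, hn⟩ := (htail.eventually (gt_mem_nhds hball)).exists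
  filter_upwards [tendsto_norm_cocompact_atTop.eventually_ge_atTop ((n : ℝ) + 1)] with z hz
  rw [dist_zero_right, norm_norm]
  by_contra hcon
  rw [not_lt] at hcon
  refine absurd hn (not_lt.2 ?_)
  rw [← Measure.addHaar_ball_center volume z δ]
  refine measure_mono fun w hw => ?_
  rw [Metric.mem_ball, dist_eq_norm] at hw
  have h1 : ‖f z - f w‖ ≤ η / 2 := by
    refine (hC z w).trans (le_trans ?_ hδ)
    rw [norm_sub_rev]
    gcongr
  have h2 : ‖f z‖ ≤ ‖f z - f w‖ + ‖f w‖ := by simpa using norm_add_le (f z - f w) (f w)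
  have h3 : ‖z‖ ≤ ‖w - z‖ + ‖w‖ := by
    rw [norm_sub_rev]; simpa using norm_add_le (z - w) w
  refine ⟨?_, ?_⟩
  · change η / 2 ≤ ‖f w‖
    linarith
  · change (n : ℝ) ≤ ‖w‖
    linarith


/-! ### The first-order system for one column -/

/-- One column of the normalized system. -/
structure Sys (ε r : ℝ) (q : ℂ → ℂ) (k : ℂ) (a b : ℂ → ℂ) : Prop where
  da : Differentiable ℝ a
  db : Differentiable ℝ b
  ea : ∀ z, wDbar a z = q z * b z
  eb : ∀ z, wD b z + Complex.I * k * b z = (starRingEnd ℂ) (q z) * a z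
  la : MemLp (fun z => a z - 1) (ENNReal.ofReal r)
  lb : MemLp b (ENNReal.ofReal r)
  ha : IsHolder ε (fun z => a z - 1)
  hb : IsHolder ε b

lemma wD_mul {f g : ℂ → ℂ} {z : ℂ} (hf : DifferentiableAt ℝ f z) (hg : DifferentiableAt ℝ g z) :
    wD (fun w => f w * g w) z = wD f z * g z + f z * wD g z := by
  have := (hf.hasFDerivAt.mul hg.hasFDerivAt).fderiv
  have e : fderiv ℝ (fun w => f w * g w) z = f z • fderiv ℝ g z + g z • fderiv ℝ f z := this
  simp only [wD, e]
  simp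
  ring

lemma wD_sub {f g : ℂ → ℂ} {z : ℂ} (hf : DifferentiableAt ℝ f z) (hg : DifferentiableAt ℝ g z) :
    wD (fun w => f w - g w) z = wD f z - wD g z := by
  have e : fderiv ℝ (fun w => f w - g w) z = fderiv ℝ f z - fderiv ℝ g z :=
    (hf.hasFDerivAt.sub hg.hasFDerivAt).fderiv
  simp only [wD, e]
  simp
  ring

lemma Adm.neg {R B : ℝ} {Q : ℂ → ℂ} (hQ : Adm R B Q) : Adm R B (fun z => - Q z) :=
  ⟨hQ.meas.neg, fun w => by rw [norm_neg]; exact hQ.bd w, fun w hw => by rw [hQ.supp w hw, neg_zero]⟩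

lemma memLp_conj {p : ENNReal} {f : ℂ → ℂ} (hf : MemLp f p) :
    MemLp (fun z => (starRingEnd ℂ) (f z)) p :=
  hf.of_le (continuous_conj.comp_aestronglyMeasurable hf.1)
    (ae_of_all _ fun z => by rw [RCLike.norm_conj])

lemma sys_zero_exists {R B ε r : ℝ} {Q : ℂ → ℂ} (hε0 : 0 < ε) (hε1 : ε < 1) (hr : 2 < r)
    (hQ : Adm R B Q) (hQH : IsHolder ε Q) : ∃ a b, Sys ε r Q 0 a b := by
  have hQH' : IsHolder ε (fun z => - Q z) := by simpa using hQH.const_mul (-1)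
  obtain ⟨f, B1, hf, hfd, hfw⟩ := scalar_exists hε0 hε1 hQ hQH
  obtain ⟨g, B2, hg, hgd, hgw⟩ := scalar_exists hε0 hε1 hQ.neg hQH'
  have hfl := cauchyT_memLp hr hf
  have hgl := cauchyT_memLp hr hg
  have hfH := cauchyT_isHolder hε0 hε1 hf
  have hgH := cauchyT_isHolder hε0 hε1 hg
  set u : ℂ → ℂ := fun z => 1 + cauchyT f z with hu
  set v : ℂ → ℂ := fun z => 1 + cauchyT g z with hv
  have hsd : Differentiable ℝ (fun z => (2 : ℂ)⁻¹ * (u z + v z)) := (hfd.add hgd).const_mul _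
  have hdd : Differentiable ℝ (fun z => (2 : ℂ)⁻¹ * (u z - v z)) := (hfd.sub hgd).const_mul _
  have h2 : (starRingEnd ℂ) ((2 : ℂ)⁻¹) = 2⁻¹ := by rw [map_inv₀, Complex.conj_ofNat 2]
  have e1 : (fun z => (2 : ℂ)⁻¹ * (u z + v z) - 1)
      = fun z => (2 : ℂ)⁻¹ * (cauchyT f z + cauchyT g z) := by
    ext z; simp only [hu, hv]; ring
  have e2 : (fun z => (2 : ℂ)⁻¹ * (u z - v z))
      = fun z => (2 : ℂ)⁻¹ * (cauchyT f z + (-1) * cauchyT g z) := by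
    ext z; simp only [hu, hv]; ring
  refine ⟨fun z => (2 : ℂ)⁻¹ * (u z + v z), fun z => (starRingEnd ℂ) ((2 : ℂ)⁻¹ * (u z - v z)),
    hsd, fun z => diff_conj (hdd z), fun z => ?_, fun z => ?_, ?_, ?_, ?_, ?_⟩
  · rw [wDbar_mul (differentiableAt_const _) (g := fun z => u z + v z) ((hfd z).add (hgd z)), wDbar_const,
      wDbar_add (hfd z) (hgd z), hfw, hgw, map_mul, map_sub, h2]
    simp only [hu, hv]
    ring
  · rw [wD_conj (hdd z), wDbar_mul (differentiableAt_const _) (g := fun z => u z - v z) ((hfd z).sub (hgd z)), wDbar_const,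
      wDbar_sub (hfd z) (hgd z), hfw, hgw]
    simp only [map_mul, map_sub, map_add, map_neg, h2, conj_conj, map_zero, hu, hv]
    ring
  · rw [e1]; exact (hfl.add hgl).const_mul _
  · refine memLp_conj ?_
    rw [e2]; exact (hfl.add (hgl.const_mul _)).const_mul _
  · rw [e1]; exact (hfH.add hgH).const_mul _
  · refine IsHolder.conj ?_
    rw [e2]; exact (hfH.add (hgH.const_mul _)).const_mul _

lemma sys_zero_unique {R B ε r : ℝ} {Q a b a' b' : ℂ → ℂ} (hε0 : 0 < ε) (hε1 : ε < 1) (hr : 2 < r)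
    (hQ : Adm R B Q) (hQH : IsHolder ε Q) (h : Sys ε r Q 0 a b) (h' : Sys ε r Q 0 a' b') :
    a = a' ∧ b = b' := by
  have hQH' : IsHolder ε (fun z => - Q z) := by simpa using hQH.const_mul (-1)
  have hzero : ∀ c : ℂ, c = 1 ∨ c = -1 → ∀ z,
      (a z - a' z) + c * (starRingEnd ℂ) (b z - b' z) = 0 := by
    intro c hc
    have hcc : (starRingEnd ℂ) c = c := by rcases hc with rfl | rfl <;> simp
    have hc2 : c * c = 1 := by rcases hc with rfl | rfl <;> simp
    have hcA : Adm R B (fun z => c * Q z) ∧ IsHolder ε (fun z => c * Q z) := by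
      rcases hc with rfl | rfl
      · simpa using ⟨hQ, hQH⟩
      · simpa using ⟨hQ.neg, hQH'⟩
    have hbd : Differentiable ℝ (fun z => b z - b' z) := h.db.sub h'.db
    have hbc : Differentiable ℝ (fun z => (starRingEnd ℂ) (b z - b' z)) :=
      fun z => diff_conj (hbd z)
    have had : Differentiable ℝ (fun z => a z - a' z) := h.da.sub h'.da
    have hH : IsHolder ε (fun z => (a z - a' z) + c * (starRingEnd ℂ) (b z - b' z)) := by
      have h1 := (h.ha.add (h'.ha.const_mul (-1))).add
        (((h.hb.add (h'.hb.const_mul (-1))).conj).const_mul c)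
      refine cast ?_ h1
      congr 1
      ext z
      simp only [map_add, map_mul, map_sub, map_neg, map_one]
      ring
    have hL : MemLp (fun z => (a z - a' z) + c * (starRingEnd ℂ) (b z - b' z))
        (ENNReal.ofReal r) := by
      have h1 := (h.la.sub h'.la).add ((memLp_conj (h.lb.sub h'.lb)).const_mul c)
      refine cast ?_ h1
      congr 1
      ext z
      simp
    refine pseudoanalytic_liouville hε0 hε1 hcA.1 hcA.2 (had.add (hbc.const_mul c)) hH
      (fun z => ?_) (tendsto_of_memLp hε0 hr hL hH)
    rw [wDbar_add (had z) ((hbc.const_mul c) z), wDbar_mul (differentiableAt_const c) (hbc z),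
      wDbar_const, wDbar_conj (hbd z), wDbar_sub (h.da z) (h'.da z), wD_sub (h.db z) (h'.db z),
      h.ea, h'.ea]
    have e1 := h.eb z
    have e2 := h'.eb z
    rw [mul_zero, zero_mul, add_zero] at e1 e2
    rw [e1, e2]
    simp only [map_add, map_sub, map_mul, hcc, conj_conj]
    linear_combination (-(Q z * (b z - b' z))) * hc2
  have hA : ∀ z, a z - a' z = 0 ∧ b z - b' z = 0 := fun z => by
    have h1 := hzero 1 (Or.inl rfl) z
    have h2 := hzero (-1) (Or.inr rfl) z
    refine ⟨by linear_combination (1 / 2 : ℂ) * (h1 + h2), ?_⟩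
    have h3 : (starRingEnd ℂ) (b z - b' z) = 0 := by linear_combination (1 / 2 : ℂ) * (h1 - h2)
    exact (map_eq_zero _).1 h3
  exact ⟨funext fun z => sub_eq_zero.1 (hA z).1, funext fun z => sub_eq_zero.1 (hA z).2⟩

/-! ### The unimodular phase -/

/-- `exp (i (k z + conj (k z)))`. -/
noncomputable def phase (k z : ℂ) : ℂ := Complex.exp (I * (k * z + (starRingEnd ℂ) (k * z)))

lemma phase_eq (k z : ℂ) : phase k z = Complex.exp (I * ((2 * (k * z).re : ℝ) : ℂ)) := by
  rw [phase, Complex.add_conj]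

lemma phase_norm (k z : ℂ) : ‖phase k z‖ = 1 := by
  rw [phase_eq, mul_comm, Complex.norm_exp_ofReal_mul_I]

lemma phase_neg_mul (k z : ℂ) : phase (-k) z * phase k z = 1 := by
  rw [phase, phase, ← Complex.exp_add, neg_mul, map_neg]
  ring_nf
  simp

lemma phase_conj (k z : ℂ) : (starRingEnd ℂ) (phase (-k) z) = phase k z := by
  rw [phase, phase, ← Complex.exp_conj]
  simp only [map_mul, map_add, map_neg, conj_I, conj_conj]
  ring_nf

lemma phase_diff (k : ℂ) : Differentiable ℝ (phase k) := by
  intro z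
  have h1 : DifferentiableAt ℝ (fun z : ℂ => k * z) z := (differentiableAt_id).const_mul k
  exact ((h1.add (diff_conj h1)).const_mul I).cexp

lemma phase_wD (k z : ℂ) : wD (phase k) z = phase k z * (I * k) := by
  have h1 : HasFDerivAt (fun z : ℂ => k * z) (k • ContinuousLinearMap.id ℝ ℂ) z :=
    (hasFDerivAt_id z).const_mul k
  have h2 : HasFDerivAt (fun z : ℂ => (starRingEnd ℂ) (k * z))
      ((conjCLE : ℂ →L[ℝ] ℂ).comp (k • ContinuousLinearMap.id ℝ ℂ)) z :=
    (conjCLE : ℂ →L[ℝ] ℂ).hasFDerivAt.comp z h1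
  have h3 := ((h1.add h2).const_mul I).cexp.fderiv
  have e : fderiv ℝ (phase k) z = _ := h3
  simp only [wD, e]
  simp [phase]
  linear_combination (-(1 / 2 : ℂ) * cexp (I * (k * z + (starRingEnd ℂ) k * (starRingEnd ℂ) z)) * I *
    (k - (starRingEnd ℂ) k)) * I_sq

lemma phase_holder {ε : ℝ} (h0 : 0 < ε) (h1 : ε < 1) (k : ℂ) : IsHolder ε (phase k) := by
  refine isHolder_of_lip (L := 2 * ‖k‖) (A := 1) h0 h1 (by positivity) (fun z z' => ?_)
    (fun z => (phase_norm k z).le)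
  have e : phase k z - phase k z' = phase k z' * (phase k (z - z') - 1) := by
    rw [mul_sub, mul_one, phase, phase, phase, ← Complex.exp_add]
    congr 2
    simp only [mul_sub, map_sub]
    ring
  rw [e, norm_mul, phase_norm, one_mul, phase_eq]
  refine (Real.norm_exp_I_mul_ofReal_sub_one_le).trans ?_
  rw [mul_assoc, ← norm_mul, norm_mul, Real.norm_of_nonneg (by norm_num : (0 : ℝ) ≤ 2)]
  gcongr
  exact Complex.abs_re_le_norm _

lemma Sys.shift {ε r : ℝ} {q a b : ℂ → ℂ} {k : ℂ} (hε0 : 0 < ε) (hε1 : ε < 1) (hr : 2 < r)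
    (h : Sys ε r q k a b) (l : ℂ) :
    Sys ε r (fun z => q z * phase (-l) z) (k - l) a (fun z => phase l z * b z) := by
  obtain ⟨D, hD⟩ := bounded_of_tendsto h.db.continuous (tendsto_of_memLp hε0 hr h.lb h.hb)
  refine ⟨h.da, (phase_diff l).mul h.db, fun z => ?_, fun z => ?_, h.la, ?_, h.ha,
    (phase_holder hε0 hε1 l).mul h.hb (fun z => (phase_norm l z).le) hD⟩
  · rw [h.ea]
    linear_combination (-(q z * b z)) * phase_neg_mul l z
  · rw [wD_mul (phase_diff l z) (h.db z), phase_wD, map_mul, phase_conj]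
    linear_combination phase l z * h.eb z
  · refine h.lb.of_le (((phase_diff l).mul h.db).continuous.aestronglyMeasurable)
      (ae_of_all _ fun z => ?_)
    simp [phase_norm]

lemma adm_phase {R B : ℝ} {q : ℂ → ℂ} (hq : Adm R B q) (l : ℂ) :
    Adm R B (fun z => q z * phase l z) :=
  ⟨hq.meas.mul (phase_diff l).continuous.aestronglyMeasurable,
    fun w => by rw [norm_mul, phase_norm, mul_one]; exact hq.bd w,
    fun w hw => by rw [hq.supp w hw, zero_mul]⟩

lemma sys_exists {R B ε r : ℝ} {q : ℂ → ℂ} (hε0 : 0 < ε) (hε1 : ε < 1) (hr : 2 < r)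
    (hq : Adm R B q) (hqH : IsHolder ε q) (k : ℂ) : ∃ a b, Sys ε r q k a b := by
  have hH : IsHolder ε (fun z => q z * phase (-k) z) :=
    hqH.mul (phase_holder hε0 hε1 _) hq.bd fun z => (phase_norm _ z).le
  obtain ⟨a, b, h⟩ := sys_zero_exists hε0 hε1 hr (adm_phase hq (-k)) hH
  have h2 := h.shift hε0 hε1 hr (-k)
  refine ⟨a, fun z => phase (-k) z * b z, cast ?_ h2⟩
  congr 1
  · ext z
    rw [neg_neg, mul_assoc, phase_neg_mul, mul_one]
  · ring

lemma sys_unique {R B ε r : ℝ} {q a b a' b' : ℂ → ℂ} {k : ℂ} (hε0 : 0 < ε) (hε1 : ε < 1)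
    (hr : 2 < r) (hq : Adm R B q) (hqH : IsHolder ε q) (h : Sys ε r q k a b)
    (h' : Sys ε r q k a' b') : a = a' ∧ b = b' := by
  have hH : IsHolder ε (fun z => q z * phase (-k) z) :=
    hqH.mul (phase_holder hε0 hε1 _) hq.bd fun z => (phase_norm _ z).le
  have s1 := h.shift hε0 hε1 hr k
  have s2 := h'.shift hε0 hε1 hr k
  rw [sub_self] at s1 s2
  obtain ⟨ea, eb⟩ := sys_zero_unique hε0 hε1 hr (adm_phase hq (-k)) hH s1 s2
  refine ⟨ea, funext fun z => ?_⟩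
  have := congrFun eb z
  have hne : phase k z ≠ 0 := fun h0 => by simpa [h0] using phase_norm k z
  exact mul_left_cancel₀ hne this

lemma adm_of_compact {ε : ℝ} {q : ℂ → ℂ} (hε0 : 0 < ε) (hs : HasCompactSupport q)
    (hH : IsHolder ε q) : ∃ R B, Adm R B q := by
  have hc := hH.continuous hε0
  obtain ⟨B, hB⟩ := hs.exists_bound_of_continuous hc
  obtain ⟨R, hR⟩ := hs.isCompact.isBounded.exists_norm_le
  refine ⟨R, B, hc.aestronglyMeasurable, hB, fun w hw => ?_⟩
  by_contra hne
  exact absurd (hR w (subset_tsupport q hne)) (not_le.2 hw)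

/-- The second column is, after complex conjugation, a first column at `conj k`. -/
lemma sys_conj {ε r : ℝ} {q c d : ℂ → ℂ} {k : ℂ} (hc : Differentiable ℝ c) (hd : Differentiable ℝ d)
    (e1 : ∀ z, wDbar c z - Complex.I * k * c z = q z * d z)
    (e2 : ∀ z, wD d z = (starRingEnd ℂ) (q z) * c z)
    (lc : MemLp c (ENNReal.ofReal r)) (ld : MemLp (fun z => d z - 1) (ENNReal.ofReal r))
    (hc' : IsHolder ε c) (hd' : IsHolder ε (fun z => d z - 1)) :
    Sys ε r q ((starRingEnd ℂ) k) (fun z => (starRingEnd ℂ) (d z))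
      (fun z => (starRingEnd ℂ) (c z)) := by
  refine ⟨fun z => diff_conj (hd z), fun z => diff_conj (hc z), fun z => ?_, fun z => ?_, ?_,
    memLp_conj lc, ?_, hc'.conj⟩
  · rw [wDbar_conj (hd z), e2, map_mul, conj_conj]
  · have := congrArg (starRingEnd ℂ) (e1 z)
    simp only [map_sub, map_mul, conj_I] at this
    rw [wD_conj (hc z)]
    linear_combination this
  · simpa using memLp_conj ld
  · simpa using hd'.conj

theorem exponentially_growing_solutions_exist_unique
    (ε : ℝ) (hε0 : 0 < ε) (hε1 : ε < 1) (q : ℂ → ℂ)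
    (hqsupp : HasCompactSupport q) (hqhold : IsHolder ε q)
    (r : ℝ) (hr : 2 < r) (k : ℂ) :
    ∃! m : (ℂ → ℂ) × (ℂ → ℂ) × (ℂ → ℂ) × (ℂ → ℂ),
      -- m = (m₁₁, m₁₂, m₂₁, m₂₂)
      (Differentiable ℝ m.1 ∧ Differentiable ℝ m.2.1 ∧
        Differentiable ℝ m.2.2.1 ∧ Differentiable ℝ m.2.2.2) ∧
      (∀ z, wDbar m.1 z = q z * m.2.2.1 z) ∧
      (∀ z, wD m.2.2.1 z + Complex.I * k * m.2.2.1 z = (starRingEnd ℂ) (q z) * m.1 z) ∧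
      (∀ z, wDbar m.2.1 z - Complex.I * k * m.2.1 z = q z * m.2.2.2 z) ∧
      (∀ z, wD m.2.2.2 z = (starRingEnd ℂ) (q z) * m.2.1 z) ∧
      MemLp (fun z => m.1 z - 1) (ENNReal.ofReal r) ∧
      MemLp m.2.1 (ENNReal.ofReal r) ∧
      MemLp m.2.2.1 (ENNReal.ofReal r) ∧
      MemLp (fun z => m.2.2.2 z - 1) (ENNReal.ofReal r) ∧
      IsHolder ε (fun z => m.1 z - 1) ∧ IsHolder ε m.2.1 ∧
      IsHolder ε m.2.2.1 ∧ IsHolder ε (fun z => m.2.2.2 z - 1) := by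
  obtain ⟨R, B, hq⟩ := adm_of_compact hε0 hqsupp hqhold
  obtain ⟨a, b, hab⟩ := sys_exists hε0 hε1 hr hq hqhold k
  obtain ⟨c, d, hcd⟩ := sys_exists hε0 hε1 hr hq hqhold ((starRingEnd ℂ) k)
  refine ⟨(a, (fun z => (starRingEnd ℂ) (d z)), b, fun z => (starRingEnd ℂ) (c z)), ?_, ?_⟩
  · refine ⟨⟨hab.da, fun z => diff_conj (hcd.db z), hab.db, fun z => diff_conj (hcd.da z)⟩,
      hab.ea, hab.eb, fun z => ?_, fun z => ?_, hab.la, memLp_conj hcd.lb, hab.lb, ?_,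
      hab.ha, hcd.hb.conj, hab.hb, ?_⟩
    · have := congrArg (starRingEnd ℂ) (hcd.eb z)
      simp only [map_add, map_mul, conj_I, conj_conj] at this
      rw [wDbar_conj (hcd.db z)]
      linear_combination this
    · simp only
      rw [wD_conj (hcd.da z), hcd.ea, map_mul]
    · simpa using memLp_conj hcd.la
    · simpa using hcd.ha.conj
  · rintro ⟨m11, m12, m21, m22⟩ ⟨⟨d1, d2, d3, d4⟩, e1, e2, e3, e4, l1, l2, l3, l4, h1, h2, h3, h4⟩
    simp only at *
    have s1 : Sys ε r q k m11 m21 := ⟨d1, d3, e1, e2, l1, l3, h1, h3⟩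
    have s2 := sys_conj d2 d4 e3 e4 l2 l4 h2 h4
    obtain ⟨ea, eb⟩ := sys_unique hε0 hε1 hr hq hqhold s1 hab
    obtain ⟨ec, ed⟩ := sys_unique hε0 hε1 hr hq hqhold s2 hcd
    subst ea eb
    rw [← ec, ← ed]
    simp
end

section
/- Fix z ∈ ℂ. Let S₁₂, S₂₁ : ℂ → ℂ satisfy the symmetry S₂₁(k) = conj(S₁₂(conj(k))) for all k. Let M₁₁, M₁₂ : ℂ → ℂ be functions of k such that the maps k ↦ M₁₁(k), k ↦ M₁₂(k) and k ↦ M₁₂(conj(k)), k ↦ M₁₁(conj(k)) are real-differentiable and satisfy, for all k ∈ ℂ, ∂̄_k M₁₁(k) = M₁₂(conj(k))·e(z,−k)·S₂₁(k) and ∂̄_k M₁₂(k) = M₁₁(conj(k))·e(z,conj(k))·S₁₂(k). Define m₊ : ℂ → ℂ by m₊(k) = M₁₁(k) + conj(M₁₂(conj(k))). Then m₊ is real-differentiable and satisfies the pseudoanalytic equation ∂̄_k m₊(k) = e(z,−k)·S₂₁(k)·conj(m₊(k)) for all k ∈ ℂ. -/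
open MeasureTheory Complex

/-- The unimodular factor `e(z,k) = exp(i(zk + conj(zk)))`. -/
noncomputable def eFun (z k : ℂ) : ℂ :=
  Complex.exp (Complex.I * (z * k + (starRingEnd ℂ) (z * k)))

/-- For fixed `z`, the combination `m₊(k) = M₁₁(k) + conj(M₁₂(k̄))` satisfies the
pseudoanalytic equation `∂̄_k m₊(k) = e(z,−k)·S₂₁(k)·conj(m₊(k))`. -/
theorem pseudoanalytic_equation_for_m_plus
    (z : ℂ) (S12 S21 : ℂ → ℂ)
    (hsym : ∀ k : ℂ, S21 k = (starRingEnd ℂ) (S12 ((starRingEnd ℂ) k)))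
    (M11 M12 : ℂ → ℂ)
    (hd11 : Differentiable ℝ M11) (hd12 : Differentiable ℝ M12)
    (hd12c : Differentiable ℝ fun k => M12 ((starRingEnd ℂ) k))
    (hd11c : Differentiable ℝ fun k => M11 ((starRingEnd ℂ) k))
    (h11 : ∀ k : ℂ, wDbar M11 k = M12 ((starRingEnd ℂ) k) * eFun z (-k) * S21 k)
    (h12 : ∀ k : ℂ,
      wDbar M12 k = M11 ((starRingEnd ℂ) k) * eFun z ((starRingEnd ℂ) k) * S12 k) :
    Differentiable ℝ (fun k => M11 k + (starRingEnd ℂ) (M12 ((starRingEnd ℂ) k))) ∧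
    ∀ k : ℂ,
      wDbar (fun κ => M11 κ + (starRingEnd ℂ) (M12 ((starRingEnd ℂ) κ))) k
        = eFun z (-k) * S21 k *
          (starRingEnd ℂ) (M11 k + (starRingEnd ℂ) (M12 ((starRingEnd ℂ) k))) := by
  have hC : ∀ k : ℂ, HasFDerivAt (fun κ : ℂ => (starRingEnd ℂ) κ)
      (Complex.conjCLE : ℂ →L[ℝ] ℂ) k := fun k =>
    (Complex.conjCLE : ℂ →L[ℝ] ℂ).hasFDerivAt
  have hg : ∀ k : ℂ, HasFDerivAt (fun κ => M11 κ + (starRingEnd ℂ) (M12 ((starRingEnd ℂ) κ)))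
      (fderiv ℝ M11 k + (Complex.conjCLE : ℂ →L[ℝ] ℂ).comp
        ((fderiv ℝ M12 ((starRingEnd ℂ) k)).comp (Complex.conjCLE : ℂ →L[ℝ] ℂ))) k := by
    intro k
    have h1 : HasFDerivAt (fun κ => M12 ((starRingEnd ℂ) κ)) _ k :=
      HasFDerivAt.comp k (hd12 ((starRingEnd ℂ) k)).hasFDerivAt (hC k)
    have h2 : HasFDerivAt (fun κ => (starRingEnd ℂ) (M12 ((starRingEnd ℂ) κ))) _ k :=
      HasFDerivAt.comp k (hC (M12 ((starRingEnd ℂ) k))) h1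
    exact (hd11 k).hasFDerivAt.add h2
  refine ⟨fun k => (hg k).differentiableAt, fun k => ?_⟩
  have he : (starRingEnd ℂ) (eFun z k) = eFun z (-k) := by
    unfold eFun
    rw [← Complex.exp_conj]
    congr 1
    simp only [map_mul, map_add, map_neg, Complex.conj_I, Complex.conj_conj]
    ring
  have key : wDbar (fun κ => M11 κ + (starRingEnd ℂ) (M12 ((starRingEnd ℂ) κ))) k
      = wDbar M11 k + (starRingEnd ℂ) (wDbar M12 ((starRingEnd ℂ) k)) := by
    unfold wDbar
    rw [(hg k).fderiv]
    have h2 : (starRingEnd ℂ) (2 : ℂ) = 2 := map_ofNat _ 2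
    simp [h2]
    ring
  rw [key, h11, h12, hsym k, ← he]
  simp only [map_mul, map_add, Complex.conj_conj]
  ring
end
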